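/- arXiv:math/0702142 — 2 statements merged into one kernel-verified Lean document; each statement's English description precedes it below -/
import Mathlib

section
/- Let R be an integrally closed integral domain with quotient field K and X an indeterminate over R. Let *_X denote the operation on R[X] defined by E^{*_X} = ⋃{(EJ : J) : J a nonzero finitely generated fractional ideal of R[X]} and *_R the operation on R defined by E^{*_R} = ⋃{(EJ : J) : J a nonzero finitely generated fractional ideal of R}, where in each case (EJ : J) = {x : xJ ⊆ EJ} inside the respective quotient field. Then for every nonzero fractional ideal I of R, (I[X])^{*_X} = I^{*_R}[X], where I[X] denotes the R[X]-submodule of K(X) generated by I. -/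
open Pointwise

/-- A *semistar operation* on a domain `S` with quotient field `M`. -/
structure IsSemistarOperation (S M : Type*) [CommRing S] [Field M] [Algebra S M]
    (star : Submodule S M → Submodule S M) : Prop where
  smul_eq : ∀ a : M, a ≠ 0 → ∀ E : Submodule S M, E ≠ ⊥ → star (a • E) = a • star E
  le_star : ∀ E : Submodule S M, E ≠ ⊥ → E ≤ star E
  mono : ∀ E F : Submodule S M, E ≠ ⊥ → F ≠ ⊥ → E ≤ F → star E ≤ star F
  idem : ∀ E : Submodule S M, E ≠ ⊥ → star (star E) = star E

/-- A semistar operation has *finite character* if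
`E^* = ⋃ {F^* : F nonzero finitely generated, F ⊆ E}`. -/
def SemistarFiniteCharacter (S M : Type*) [CommRing S] [Field M] [Algebra S M]
    (star : Submodule S M → Submodule S M) : Prop :=
  ∀ E : Submodule S M, E ≠ ⊥ → ∀ x : M,
    x ∈ star E ↔ ∃ F : Submodule S M, F ≠ ⊥ ∧ F.FG ∧ F ≤ E ∧ x ∈ star F

/-- The set `E^* = ⋃ {(EJ : J) : J a nonzero finitely generated fractional ideal of S}`,
where `(EJ : J) = {x : xJ ⊆ EJ}`. -/
def bStarSet {S M : Type*} [CommRing S] [Field M] [Algebra S M] (E : Submodule S M) : Set M :=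
  ⋃ J ∈ {J : Submodule S M | J ≠ ⊥ ∧ J.FG ∧ IsFractional (nonZeroDivisors S) J},
    (((E * J) / J : Submodule S M) : Set M)

variable {R K : Type*} [CommRing R] [IsDomain R] [Field K] [Algebra R K] [IsFractionRing R K]

open Polynomial

variable {L : Type*} [Field L] [Algebra R[X] L] [IsFractionRing R[X] L]

/-!
For a nonzero finitely generated `J ≤ K(X)` with `x J ⊆ I[X] J`, the `K[X]`-span of `J` is a
faithful finitely generated `K[X]`-module stable under `x`, so `x` is integral over `K[X]` and hence
a polynomial `f`. Clearing denominators, we may take `J ≤ K[X]`; let `c(J)` be the submodule of `K`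
generated by the contents of generators of `J`. Then `c(f g) ⊆ I c(J)` for each generator `g`, and
the Dedekind–Mertens inclusion `c(f) ^ (n + 1) c(g) ⊆ c(f) ^ n c(f g)`, for `n` large, gives
`c(f) N ⊆ I N` with `N = c(f) ^ n c(J)`. So all coefficients of `f` lie in `(I N : N)`.
-/

section ContentSubmodule

variable {S A : Type*}

theorem add_pow_succ_eq_of_idem [IdemCommSemiring S] (a b : S) (n : ℕ) :
    (a + b) ^ (n + 1) = a ^ (n + 1) + b * (a + b) ^ n := by
  induction n with
  | zero => simp
  | succ n ih =>
    have absorb : a * (a + b) ^ n + (a + b) ^ (n + 1) = (a + b) ^ (n + 1) := by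
      rw [pow_succ' (a + b), add_mul, ← add_assoc, add_idem]
    calc (a + b) ^ (n + 1 + 1) = a * (a + b) ^ (n + 1) + b * (a + b) ^ (n + 1) := by
          rw [pow_succ', add_mul]
      _ = a * (a ^ (n + 1) + b * (a + b) ^ n) + b * (a + b) ^ (n + 1) := by rw [ih]
      _ = a ^ (n + 1 + 1) + b * (a * (a + b) ^ n + (a + b) ^ (n + 1)) := by ring
      _ = a ^ (n + 1 + 1) + b * (a + b) ^ (n + 1) := by rw [absorb]

/-- The content `c(f)` of a polynomial `f` over `A` relative to a base semiring `S`: the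
`S`-submodule of `A` spanned by the coefficients of `f`. For `A = S` this is `Polynomial.contentIdeal`. -/
def contentSubmodule (S : Type*) {A : Type*} [CommSemiring S] [Semiring A] [Module S A]
    (f : A[X]) : Submodule S A :=
  Submodule.span S f.coeffs

section Semiring

variable [CommSemiring S] [Semiring A] [Module S A]

theorem coeff_mem_contentSubmodule (f : A[X]) (i : ℕ) : f.coeff i ∈ contentSubmodule S f := by
  by_cases h : f.coeff i = 0
  · rw [h]
    exact zero_mem _
  · exact Submodule.subset_span (coeff_mem_coeffs h)

theorem contentSubmodule_le {f : A[X]} {N : Submodule S A} :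
    contentSubmodule S f ≤ N ↔ ∀ i, f.coeff i ∈ N := by
  refine ⟨fun h i ↦ h (coeff_mem_contentSubmodule f i), fun h ↦ Submodule.span_le.2 fun c hc ↦ ?_⟩
  obtain ⟨i, -, rfl⟩ := mem_coeffs_iff.1 hc
  exact h i

theorem contentSubmodule_fg (f : A[X]) : (contentSubmodule S f).FG :=
  ⟨f.coeffs, rfl⟩

theorem contentSubmodule_eq_bot_iff {f : A[X]} : contentSubmodule S f = ⊥ ↔ f = 0 := by
  simp only [eq_bot_iff, contentSubmodule_le, Submodule.mem_bot, Polynomial.ext_iff, coeff_zero]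

theorem contentSubmodule_eq_eraseLead_sup (f : A[X]) :
    contentSubmodule S f =
      contentSubmodule S f.eraseLead ⊔ Submodule.span S {f.leadingCoeff} := by
  refine le_antisymm (contentSubmodule_le.2 fun i ↦ ?_)
    (sup_le (contentSubmodule_le.2 fun i ↦ ?_) ?_)
  · by_cases hi : i = f.natDegree
    · rw [hi]
      exact Submodule.mem_sup_right (Submodule.mem_span_singleton_self _)
    · rw [← eraseLead_coeff_of_ne i hi]
      exact Submodule.mem_sup_left (coeff_mem_contentSubmodule _ i)
  · rw [eraseLead_coeff]
    split_ifs
    · exact zero_mem _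
    · exact coeff_mem_contentSubmodule f i
  · exact (Submodule.span_singleton_le_iff_mem _ _).2 (coeff_mem_contentSubmodule f _)

end Semiring

section CommSemiring

variable [CommSemiring S] [CommSemiring A] [Algebra S A]

theorem span_leadingCoeff_mul_span_leadingCoeff_le (f g : A[X]) :
    Submodule.span S {f.leadingCoeff} * Submodule.span S {g.leadingCoeff} ≤
      contentSubmodule S (f * g) := by
  rw [Submodule.span_mul_span, Set.singleton_mul_singleton, Submodule.span_singleton_le_iff_mem,
    ← coeff_mul_degree_add_degree]
  exact coeff_mem_contentSubmodule (f * g) _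

theorem span_leadingCoeff_mul_pow_mul_contentSubmodule_le {n : ℕ} {f g : A[X]}
    (h : Submodule.span S {f.leadingCoeff} *
        (contentSubmodule S f ^ n * contentSubmodule S g.eraseLead) ≤
      contentSubmodule S f ^ n * contentSubmodule S (f * g)) :
    Submodule.span S {f.leadingCoeff} * (contentSubmodule S f ^ n * contentSubmodule S g) ≤
      contentSubmodule S f ^ n * contentSubmodule S (f * g) := by
  rw [contentSubmodule_eq_eraseLead_sup g, Submodule.mul_sup, Submodule.mul_sup]
  refine sup_le h ?_
  rw [mul_left_comm]
  exact mul_le_mul_right (span_leadingCoeff_mul_span_leadingCoeff_le f g) _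

end CommSemiring

variable [CommRing S] [CommRing A] [Algebra S A]

theorem contentSubmodule_eraseLead_mul_le (f g : A[X]) :
    contentSubmodule S (f.eraseLead * g) ≤
      contentSubmodule S (f * g) ⊔ Submodule.span S {f.leadingCoeff} * contentSubmodule S g := by
  refine contentSubmodule_le.2 fun i ↦ ?_
  have expand : f.eraseLead * g = f * g - C f.leadingCoeff * (g * X ^ f.natDegree) := by
    rw [← self_sub_C_mul_X_pow]
    ring
  rw [expand, coeff_sub, coeff_C_mul, coeff_mul_X_pow']
  refine sub_mem (Submodule.mem_sup_left (coeff_mem_contentSubmodule _ i))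
    (Submodule.mem_sup_right (Submodule.mul_mem_mul (Submodule.mem_span_singleton_self _) ?_))
  split_ifs
  · exact coeff_mem_contentSubmodule g _
  · exact zero_mem _

theorem span_leadingCoeff_mul_contentSubmodule_mul_eraseLead_le (f g : A[X]) :
    Submodule.span S {f.leadingCoeff} * contentSubmodule S (f * g.eraseLead) ≤
      contentSubmodule S f * contentSubmodule S (f * g) := by
  have lead_le : Submodule.span S {f.leadingCoeff} ≤ contentSubmodule S f :=
    (Submodule.span_singleton_le_iff_mem _ _).2 (coeff_mem_contentSubmodule f _)
  calc Submodule.span S {f.leadingCoeff} * contentSubmodule S (f * g.eraseLead)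
    _ ≤ Submodule.span S {f.leadingCoeff} * (contentSubmodule S (f * g) ⊔
          Submodule.span S {g.leadingCoeff} * contentSubmodule S f) := by
        rw [mul_comm f, mul_comm f]
        exact mul_le_mul_right (contentSubmodule_eraseLead_mul_le g f) _
    _ = Submodule.span S {f.leadingCoeff} * contentSubmodule S (f * g) ⊔
          contentSubmodule S f *
            (Submodule.span S {f.leadingCoeff} * Submodule.span S {g.leadingCoeff}) := by
        rw [Submodule.mul_sup, ← mul_assoc, mul_comm (contentSubmodule S f)]
    _ ≤ contentSubmodule S f * contentSubmodule S (f * g) :=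
        sup_le (mul_le_mul_left lead_le _)
          (mul_le_mul_right (span_leadingCoeff_mul_span_leadingCoeff_le f g) _)

theorem contentSubmodule_pow_succ_mul_le_of_leadingCoeff {n : ℕ} {g : A[X]}
    (h : ∀ f : A[X],
      Submodule.span S {f.leadingCoeff} * (contentSubmodule S f ^ n * contentSubmodule S g) ≤
        contentSubmodule S f ^ n * contentSubmodule S (f * g)) (f : A[X]) :
    contentSubmodule S f ^ (n + 1) * contentSubmodule S g ≤
      contentSubmodule S f ^ n * contentSubmodule S (f * g) := by
  induction hm : f.support.card using Nat.strong_induction_on generalizing f with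
  | _ m ih =>
    subst hm
    by_cases hf : f = 0
    · rw [contentSubmodule_eq_bot_iff.2 hf, pow_succ, Submodule.mul_bot, Submodule.bot_mul]
      exact bot_le
    have eraseLead_le : contentSubmodule S f.eraseLead ≤ contentSubmodule S f := by
      rw [contentSubmodule_eq_eraseLead_sup f]
      exact le_sup_left
    have eraseLead_pow_mul_le : contentSubmodule S f.eraseLead ^ (n + 1) * contentSubmodule S g ≤
        contentSubmodule S f ^ n * contentSubmodule S (f * g) :=
      calc contentSubmodule S f.eraseLead ^ (n + 1) * contentSubmodule S g
        _ ≤ contentSubmodule S f.eraseLead ^ n * contentSubmodule S (f.eraseLead * g) :=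
            ih _ (eraseLead_support_card_lt hf) _ rfl
        _ ≤ contentSubmodule S f ^ n * (contentSubmodule S (f * g) ⊔
              Submodule.span S {f.leadingCoeff} * contentSubmodule S g) :=
            mul_le_mul' (pow_le_pow_left' eraseLead_le n) (contentSubmodule_eraseLead_mul_le f g)
        _ = contentSubmodule S f ^ n * contentSubmodule S (f * g) ⊔
              Submodule.span S {f.leadingCoeff} *
                (contentSubmodule S f ^ n * contentSubmodule S g) := by
            rw [Submodule.mul_sup, mul_left_comm]
        _ ≤ contentSubmodule S f ^ n * contentSubmodule S (f * g) := sup_le le_rfl (h f)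
    have pow_succ_eq : contentSubmodule S f ^ (n + 1) = contentSubmodule S f.eraseLead ^ (n + 1) ⊔
        Submodule.span S {f.leadingCoeff} * contentSubmodule S f ^ n := by
      rw [contentSubmodule_eq_eraseLead_sup f]
      exact add_pow_succ_eq_of_idem _ _ n
    rw [pow_succ_eq, Submodule.sup_mul, mul_assoc]
    exact sup_le eraseLead_pow_mul_le (h f)

theorem dedekind_mertens_le {n : ℕ} (f : A[X]) {g : A[X]} (hg : g.support.card ≤ n + 1) :
    contentSubmodule S f ^ (n + 1) * contentSubmodule S g ≤
      contentSubmodule S f ^ n * contentSubmodule S (f * g) := by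
  induction n generalizing f g with
  | zero =>
    refine contentSubmodule_pow_succ_mul_le_of_leadingCoeff
      (fun f ↦ span_leadingCoeff_mul_pow_mul_contentSubmodule_le ?_) f
    have eraseLead_eq_zero : g.eraseLead = 0 := by
      rw [← card_support_eq_zero, card_support_eraseLead]
      lia
    rw [contentSubmodule_eq_bot_iff.2 eraseLead_eq_zero, Submodule.mul_bot, Submodule.mul_bot]
    exact bot_le
  | succ n ih =>
    refine contentSubmodule_pow_succ_mul_le_of_leadingCoeff
      (fun f ↦ span_leadingCoeff_mul_pow_mul_contentSubmodule_le ?_) f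
    have eraseLead_card_le : g.eraseLead.support.card ≤ n + 1 := by
      rw [card_support_eraseLead]
      lia
    calc Submodule.span S {f.leadingCoeff} *
          (contentSubmodule S f ^ (n + 1) * contentSubmodule S g.eraseLead)
      _ ≤ Submodule.span S {f.leadingCoeff} *
            (contentSubmodule S f ^ n * contentSubmodule S (f * g.eraseLead)) :=
          mul_le_mul_right (ih f eraseLead_card_le) _
      _ = contentSubmodule S f ^ n *
            (Submodule.span S {f.leadingCoeff} * contentSubmodule S (f * g.eraseLead)) :=
          mul_left_comm _ _ _
      _ ≤ contentSubmodule S f ^ n * (contentSubmodule S f * contentSubmodule S (f * g)) :=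
          mul_le_mul_right (span_leadingCoeff_mul_contentSubmodule_mul_eraseLead_le f g) _
      _ = contentSubmodule S f ^ (n + 1) * contentSubmodule S (f * g) := by
          rw [pow_succ, mul_assoc]

theorem exists_contentSubmodule_pow_succ_mul_iSup_le (f : A[X]) (s : Finset A[X])
    {D : Submodule S A} (hD : ∀ g ∈ s, contentSubmodule S (f * g) ≤ D) :
    ∃ n, contentSubmodule S f ^ (n + 1) * ⨆ g ∈ s, contentSubmodule S g ≤
      contentSubmodule S f ^ n * D := by
  refine ⟨s.sup fun g ↦ g.support.card, ?_⟩
  simp only [Submodule.mul_iSup, iSup_le_iff]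
  intro g hg
  have card_le : g.support.card ≤ (s.sup fun g ↦ g.support.card) + 1 :=
    (Finset.le_sup (f := fun g : A[X] ↦ g.support.card) hg).trans (Nat.le_succ _)
  exact (dedekind_mertens_le f card_le).trans (mul_le_mul_right (hD g hg) _)

end ContentSubmodule

section CoeffsIn

variable {S A : Type*} [CommSemiring S] [CommSemiring A] [Algebra S A]

attribute [local instance] Polynomial.algebra

/-- `N[X]`: the polynomials all of whose coefficients lie in the `S`-submodule `N` of `A`, as an
`S[X]`-submodule of `A[X]`, where `S[X]` acts through `Polynomial.algebra`. -/
def coeffsIn (N : Submodule S A) : Submodule S[X] A[X] where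
  carrier := {f | ∀ i, f.coeff i ∈ N}
  add_mem' hf hg i := by
    rw [coeff_add]
    exact add_mem (hf i) (hg i)
  zero_mem' i := by
    rw [coeff_zero]
    exact zero_mem N
  smul_mem' p f hf i := by
    rw [Algebra.smul_def, algebraMap_def, coe_mapRingHom, coeff_mul]
    refine sum_mem fun ij _ ↦ ?_
    rw [coeff_map, ← Algebra.smul_def]
    exact N.smul_mem _ (hf _)

theorem contentSubmodule_le_iff_mem_coeffsIn {N : Submodule S A} {f : A[X]} :
    contentSubmodule S f ≤ N ↔ f ∈ coeffsIn N :=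
  contentSubmodule_le

theorem C_mem_coeffsIn {N : Submodule S A} {a : A} : C a ∈ coeffsIn N ↔ a ∈ N := by
  refine ⟨fun h ↦ by simpa using h 0, fun h i ↦ ?_⟩
  rw [coeff_C]
  split_ifs
  · exact h
  · exact zero_mem N

theorem coeffsIn_le {N : Submodule S A} {P : Submodule S[X] A[X]} :
    coeffsIn N ≤ P ↔ ∀ a ∈ N, C a ∈ P := by
  refine ⟨fun h a ha ↦ h (C_mem_coeffsIn.2 ha), fun h f hf ↦ ?_⟩
  rw [f.as_sum_range_C_mul_X_pow]
  refine sum_mem fun i _ ↦ ?_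
  have X_pow_smul : C (f.coeff i) * X ^ i = (X ^ i : S[X]) • C (f.coeff i) := by
    rw [Algebra.smul_def, algebraMap_def, coe_mapRingHom, Polynomial.map_pow, map_X, mul_comm]
  rw [X_pow_smul]
  exact P.smul_mem _ (h _ (hf i))

theorem coeffsIn_span (s : Set A) :
    coeffsIn (Submodule.span S s) = Submodule.span S[X] (C '' s) := by
  refine le_antisymm (coeffsIn_le.2 fun a ha ↦ ?_) (Submodule.span_le.2 ?_)
  · induction ha using Submodule.span_induction with
    | mem a ha => exact Submodule.subset_span ⟨a, ha, rfl⟩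
    | zero => rw [C_0]; exact zero_mem _
    | add a b _ _ ha hb => rw [C_add]; exact add_mem ha hb
    | smul r a _ ha =>
      have C_smul : (C (r • a) : A[X]) = (C r : S[X]) • C a := by
        rw [Algebra.smul_def, Algebra.smul_def, algebraMap_def, coe_mapRingHom, map_C, C_mul]
      rw [C_smul]
      exact Submodule.smul_mem _ _ ha
  · rintro _ ⟨a, ha, rfl⟩
    exact C_mem_coeffsIn.2 (Submodule.subset_span ha)

theorem coeffsIn_mul (M N : Submodule S A) : coeffsIn (M * N) = coeffsIn M * coeffsIn N := by
  conv_lhs => rw [← M.span_eq, ← N.span_eq, Submodule.span_mul_span]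
  conv_rhs => rw [← M.span_eq, ← N.span_eq]
  rw [coeffsIn_span, coeffsIn_span, coeffsIn_span, Submodule.span_mul_span, Set.image_mul]

theorem coeffsIn_fg {N : Submodule S A} (hN : N.FG) : (coeffsIn N).FG := by
  obtain ⟨s, rfl⟩ := hN
  rw [coeffsIn_span]
  exact Submodule.fg_span (s.finite_toSet.image C)

theorem coeffsIn_eq_bot_iff {N : Submodule S A} : coeffsIn N = ⊥ ↔ N = ⊥ := by
  rw [eq_bot_iff, coeffsIn_le, eq_bot_iff]
  simp only [Submodule.mem_bot, C_eq_zero]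
  rfl

/-- `N[X]` inside an `A[X]`-algebra `M`, such as the field of rational functions over a field `A`:
the image in `M` of the polynomials with all coefficients in the `S`-submodule `N` of `A`. -/
noncomputable def polynomialExtension (M : Type*) [CommSemiring M] [Algebra S[X] M] [Algebra A[X] M]
    [IsScalarTower S[X] A[X] M] (N : Submodule S A) : Submodule S[X] M :=
  (coeffsIn N).map (IsScalarTower.toAlgHom S[X] A[X] M).toLinearMap

theorem polynomialExtension_span (M : Type*) [CommSemiring M] [Algebra S[X] M] [Algebra A[X] M]
    [IsScalarTower S[X] A[X] M] (s : Set A) :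
    polynomialExtension M (Submodule.span S s) =
      Submodule.span S[X] ((algebraMap A[X] M).comp C '' s) := by
  rw [polynomialExtension, coeffsIn_span, Submodule.map_span, Set.image_image]
  rfl

end CoeffsIn

theorem mul_div_self_le_mul_mul_div_mul {S A : Type*} [CommSemiring S] [CommSemiring A]
    [Algebra S A] (E J J' : Submodule S A) : E * J / J ≤ E * (J * J') / (J * J') := by
  rw [Submodule.le_div_iff_mul_le, ← mul_assoc, ← mul_assoc]
  exact mul_le_mul_left (Submodule.le_div_iff_mul_le.1 le_rfl) J'

theorem apply_mem_map_div_map_iff {S A B : Type*} [CommSemiring S] [CommSemiring A] [Algebra S A]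
    [CommSemiring B] [Algebra S B] {φ : A →ₐ[S] B} (hφ : Function.Injective φ)
    {E J : Submodule S A} {x : A} :
    φ x ∈ E.map φ.toLinearMap / J.map φ.toLinearMap ↔ x ∈ E / J := by
  have map_mul_mem_iff (y : A) : φ x * φ y ∈ E.map φ.toLinearMap ↔ x * y ∈ E := by
    rw [← map_mul]
    exact hφ.mem_set_image
  simp only [Submodule.mem_div_iff_forall_mul_mem]
  refine ⟨fun h y hy ↦ (map_mul_mem_iff y).1 (h _ (Submodule.mem_map_of_mem hy)), ?_⟩
  rintro h _ ⟨y, hy, rfl⟩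
  exact (map_mul_mem_iff y).2 (h y hy)

section BStar

variable {S F : Type*} [CommRing S] [Field F] [Algebra S F] [IsFractionRing S F]

theorem mem_bStarSet {E : Submodule S F} {x : F} :
    x ∈ bStarSet E ↔ ∃ J : Submodule S F, J ≠ ⊥ ∧ J.FG ∧ x ∈ E * J / J := by
  simp only [bStarSet, Set.mem_iUnion, Set.mem_ofPred_eq, SetLike.mem_coe, exists_prop]
  refine exists_congr fun J ↦ ⟨fun ⟨⟨h0, hfg, _⟩, hx⟩ ↦ ⟨h0, hfg, hx⟩, fun ⟨h0, hfg, hx⟩ ↦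
    ⟨⟨h0, hfg, FractionalIdeal.isFractional_of_fg hfg⟩, hx⟩⟩

theorem mem_bStarSet_iff_exists_le_one {E : Submodule S F} {x : F} :
    x ∈ bStarSet E ↔ ∃ J : Submodule S F, J ≤ 1 ∧ J ≠ ⊥ ∧ J.FG ∧ x ∈ E * J / J := by
  refine ⟨fun hx ↦ ?_, fun ⟨J, _, hJ⟩ ↦ mem_bStarSet.2 ⟨J, hJ⟩⟩
  obtain ⟨J, hJ0, hJfg, hx⟩ := mem_bStarSet.1 hx
  obtain ⟨d, hd, hdJ⟩ := FractionalIdeal.isFractional_of_fg (S := nonZeroDivisors S) hJfg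
  have : Nontrivial S := (algebraMap S F).domain_nontrivial
  have hd0 : algebraMap S F d ≠ 0 := IsFractionRing.to_map_ne_zero_of_mem_nonZeroDivisors hd
  refine ⟨J * Submodule.span S {algebraMap S F d}, ?_, mul_ne_zero hJ0 ?_,
    hJfg.mul (Submodule.fg_span_singleton _), mul_div_self_le_mul_mul_div_mul E J _ hx⟩
  · rw [← J.span_eq, Submodule.span_mul_span, Submodule.span_le]
    rintro _ ⟨a, ha, _, rfl, rfl⟩
    obtain ⟨r, hr⟩ := hdJ a ha
    exact Submodule.mem_one.2 ⟨r, by rw [hr, Algebra.smul_def, mul_comm]⟩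
  · rwa [Ne, Submodule.zero_eq_bot, Submodule.span_singleton_eq_bot]

/-- The set `bStarSet E` as an `S`-submodule: it is closed under addition because `(EJ : J)` and
`(EJ' : J')` are both contained in `(EJJ' : JJ')`. -/
def bStar (E : Submodule S F) : Submodule S F where
  carrier := bStarSet E
  add_mem' hx hy := by
    obtain ⟨J, hJ0, hJfg, hx⟩ := mem_bStarSet.1 hx
    obtain ⟨J', hJ'0, hJ'fg, hy⟩ := mem_bStarSet.1 hy
    refine mem_bStarSet.2 ⟨J * J', mul_ne_zero hJ0 hJ'0, hJfg.mul hJ'fg,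
      add_mem (mul_div_self_le_mul_mul_div_mul E J J' hx) ?_⟩
    rw [mul_comm J]
    exact mul_div_self_le_mul_mul_div_mul E J' J hy
  zero_mem' := mem_bStarSet.2 ⟨1, one_ne_zero, ⟨{1}, by simp [Submodule.one_eq_span]⟩, zero_mem _⟩
  smul_mem' r x hx := by
    obtain ⟨J, hJ0, hJfg, hx⟩ := mem_bStarSet.1 hx
    exact mem_bStarSet.2 ⟨J, hJ0, hJfg, Submodule.smul_mem _ r hx⟩

theorem bStarSet_subset_range_of_isIntegrallyClosed {B : Type*} [CommRing B]
    [IsIntegrallyClosed B] [Algebra S B] [Algebra B F] [IsScalarTower S B F] [IsFractionRing B F]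
    {E : Submodule S F} (hE : ∀ e ∈ E, e ∈ (algebraMap B F).range) :
    bStarSet E ⊆ (algebraMap B F).range := by
  intro x hx
  obtain ⟨J, hJ0, ⟨s, rfl⟩, hx⟩ := mem_bStarSet.1 hx
  set N : Submodule B F := Submodule.span B s with hN
  have J_le : Submodule.span S (s : Set F) ≤ N.restrictScalars S :=
    Submodule.span_le_restrictScalars S B _
  have EJ_le : E * Submodule.span S (s : Set F) ≤ N.restrictScalars S := by
    refine Submodule.mul_le.2 fun e he y hy ↦ ?_
    obtain ⟨b, rfl⟩ := hE e he
    rw [← Algebra.smul_def]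
    exact N.smul_mem b (J_le hy)
  have smul_mem : ∀ y ∈ N, x • y ∈ N := by
    intro y hy
    induction hy using Submodule.span_induction with
    | mem y hy =>
      exact EJ_le (Submodule.mem_div_iff_forall_mul_mem.1 hx y (Submodule.subset_span hy))
    | zero => rw [smul_zero]; exact zero_mem N
    | add y z _ _ hy hz => rw [smul_add]; exact add_mem hy hz
    | smul b y _ hy => rw [smul_comm]; exact N.smul_mem b hy
  have N_ne_bot : N ≠ ⊥ := by
    rwa [Ne, hN, Submodule.span_eq_bot, ← Submodule.span_eq_bot (R := S)]
  exact IsIntegrallyClosed.isIntegral_iff.1 <| isIntegral_of_smul_mem_submodule N N_ne_bot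
    (Submodule.fg_span s.finite_toSet) x smul_mem

end BStar

section Polynomial

attribute [local instance] Polynomial.algebra

theorem coeff_mem_bStarSet_of_mem_coeffsIn_mul_div {S F : Type*} [CommRing S] [Field F]
    [Algebra S F] [IsFractionRing S F] {E : Submodule S F} {G : Submodule S[X] F[X]}
    (hG0 : G ≠ ⊥) (hGfg : G.FG) {f : F[X]} (hf : f ∈ coeffsIn E * G / G) (i : ℕ) :
    f.coeff i ∈ bStarSet E := by
  obtain rfl | hf0 := eq_or_ne f 0
  · rw [coeff_zero]
    exact zero_mem (bStar E)
  obtain ⟨s, rfl⟩ := hGfg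
  set N : Submodule S F := ⨆ g ∈ s, contentSubmodule S g
  have content_le_N {g : F[X]} (hg : g ∈ s) : contentSubmodule S g ≤ N :=
    le_iSup₂_of_le g hg le_rfl
  have span_le : Submodule.span S[X] (s : Set F[X]) ≤ coeffsIn N :=
    Submodule.span_le.2 fun g hg ↦ contentSubmodule_le_iff_mem_coeffsIn.1 (content_le_N hg)
  have content_mul_le (g : F[X]) (hg : g ∈ s) : contentSubmodule S (f * g) ≤ E * N := by
    rw [contentSubmodule_le_iff_mem_coeffsIn, coeffsIn_mul]
    exact mul_le_mul_right span_le _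
      (Submodule.mem_div_iff_forall_mul_mem.1 hf g (Submodule.subset_span hg))
  have N_ne_bot : N ≠ ⊥ := fun h ↦ hG0 <| by
    rwa [← le_bot_iff, ← coeffsIn_eq_bot_iff.2 h]
  have N_fg : N.FG := Submodule.fg_biSup s _ fun g _ ↦ contentSubmodule_fg g
  obtain ⟨n, hn⟩ := exists_contentSubmodule_pow_succ_mul_iSup_le f s content_mul_le
  refine mem_bStarSet.2 ⟨contentSubmodule S f ^ n * N, mul_ne_zero (pow_ne_zero n ?_) N_ne_bot,
    ((contentSubmodule_fg f).pow n).mul N_fg, ?_⟩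
  · exact mt contentSubmodule_eq_bot_iff.1 hf0
  · have content_le_div : contentSubmodule S f ≤
        E * (contentSubmodule S f ^ n * N) / (contentSubmodule S f ^ n * N) := by
      rwa [Submodule.le_div_iff_mul_le, ← mul_assoc, ← pow_succ', mul_left_comm]
    exact content_le_div (coeff_mem_contentSubmodule f i)

theorem isFractionRing_polynomial (S A M : Type*) [CommRing S] [CommRing A] [IsDomain A]
    [Algebra S A] [IsFractionRing S A] [CommRing M] [Algebra S[X] M] [IsFractionRing S[X] M]
    [Algebra A[X] M] [IsScalarTower S[X] A[X] M] : IsFractionRing A[X] M := by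
  have := (IsFractionRing.injective S A).isDomain
  have := Polynomial.isLocalization (nonZeroDivisors S) A
  exact IsFractionRing.isFractionRing_of_isDomain_of_isLocalization
    (Submonoid.map C (nonZeroDivisors S)) A[X] M

theorem toAlgHom_polynomial_injective (S A M : Type*) [CommRing S] [CommRing A] [IsDomain A]
    [Algebra S A] [IsFractionRing S A] [CommRing M] [Algebra S[X] M] [IsFractionRing S[X] M]
    [Algebra A[X] M] [IsScalarTower S[X] A[X] M] :
    Function.Injective (IsScalarTower.toAlgHom S[X] A[X] M) :=
  have := isFractionRing_polynomial S A M
  IsFractionRing.injective A[X] M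

variable {S F M : Type*} [CommRing S] [Field F] [Algebra S F] [IsFractionRing S F] [Field M]
  [Algebra S[X] M] [IsFractionRing S[X] M] [Algebra F[X] M] [IsScalarTower S[X] F[X] M]

theorem bStarSet_polynomialExtension_subset (E : Submodule S F) :
    bStarSet (polynomialExtension M E) ⊆ polynomialExtension M (bStar E) := by
  intro x hx
  have := isFractionRing_polynomial S F M
  have hφ := toAlgHom_polynomial_injective S F M
  obtain ⟨f, rfl⟩ := bStarSet_subset_range_of_isIntegrallyClosed (B := F[X])
    (by rintro _ ⟨g, -, rfl⟩; exact ⟨g, rfl⟩) hx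
  obtain ⟨J, hJ1, hJ0, hJfg, hf⟩ := mem_bStarSet_iff_exists_le_one.1 hx
  set φ := IsScalarTower.toAlgHom S[X] F[X] M
  obtain ⟨G, rfl⟩ : ∃ G : Submodule S[X] F[X], G.map φ.toLinearMap = J := by
    refine ⟨J.comap φ.toLinearMap, Submodule.map_comap_eq_self (hJ1.trans ?_)⟩
    intro y hy
    obtain ⟨p, rfl⟩ := Submodule.mem_one.1 hy
    exact ⟨algebraMap S[X] F[X] p, (IsScalarTower.algebraMap_apply S[X] F[X] M p).symm⟩
  rw [polynomialExtension, ← Submodule.map_mul] at hf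
  refine ⟨f, fun i ↦ coeff_mem_bStarSet_of_mem_coeffsIn_mul_div (G := G) ?_ ?_ ?_ i, rfl⟩
  · rintro rfl
    exact hJ0 (Submodule.map_bot _)
  · exact Submodule.fg_of_fg_map_injective _ hφ hJfg
  · exact (apply_mem_map_div_map_iff hφ).1 hf

theorem polynomialExtension_bStar_le (E : Submodule S F) :
    polynomialExtension M (bStar E) ≤ bStar (polynomialExtension M E) := by
  have hφ := toAlgHom_polynomial_injective S F M
  rw [polynomialExtension, Submodule.map_le_iff_le_comap, coeffsIn_le]
  intro a ha
  obtain ⟨J, hJ0, hJfg, ha⟩ := mem_bStarSet.1 ha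
  have C_mem_div : C a ∈ coeffsIn (E * J) / coeffsIn J := by
    refine Submodule.mem_div_iff_forall_mul_mem.2 fun g hg i ↦ ?_
    rw [coeff_C_mul]
    exact Submodule.mem_div_iff_forall_mul_mem.1 ha _ (hg i)
  refine mem_bStarSet.2 ⟨polynomialExtension M J, fun h ↦ hJ0 ?_, (coeffsIn_fg hJfg).map _, ?_⟩
  · refine coeffsIn_eq_bot_iff.1 (Submodule.map_injective_of_injective
      (f := (IsScalarTower.toAlgHom S[X] F[X] M).toLinearMap) hφ ?_)
    exact h.trans (Submodule.map_bot _).symm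
  · rw [polynomialExtension, polynomialExtension, ← Submodule.map_mul, ← coeffsIn_mul]
    exact (apply_mem_map_div_map_iff hφ).2 C_mem_div

theorem bStarSet_polynomialExtension (E : Submodule S F) :
    bStarSet (polynomialExtension M E) = polynomialExtension M (bStar E) :=
  (bStarSet_polynomialExtension_subset E).antisymm (polynomialExtension_bStar_le E)

end Polynomial

theorem statement11_general {S F M : Type*} [CommRing S] [Field F] [Algebra S F]
    [IsFractionRing S F] [Field M] [Algebra S[X] M] [IsFractionRing S[X] M]
    (ι : F →+* M) (hι : ∀ r : S, ι (algebraMap S F r) = algebraMap S[X] M (C r))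
    (E : Submodule S F) :
    bStarSet (Submodule.span S[X] (ι '' (E : Set F))) =
      ((Submodule.span S[X] (ι '' bStarSet E) : Submodule S[X] M) : Set M) := by
  let := Polynomial.algebra S F
  let := (eval₂RingHom ι (algebraMap S[X] M X)).toAlgebra
  have : IsScalarTower S[X] F[X] M := .of_algebraMap_eq' <| by
    ext r
    · simp [RingHom.algebraMap_toAlgebra, hι]
    · simp [RingHom.algebraMap_toAlgebra]
  have ι_eq : ι = (algebraMap F[X] M).comp C := RingHom.ext fun a ↦ (eval₂_C ι _).symm
  have span_eq (N : Submodule S F) :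
      Submodule.span S[X] (ι '' N) = polynomialExtension M N := by
    rw [ι_eq, ← polynomialExtension_span, N.span_eq]
  rw [span_eq, bStarSet_polynomialExtension, ← span_eq]
  rfl

/-- for `R` integrally closed and every nonzero fractional ideal `I` of `R`,
`(I[X])^{*_X} = I^{*_R}[X]`, where `I[X]` is the `R[X]`-submodule of `K(X)` generated by `I`
via the canonical embedding `ι : K →+* L = K(X)`. -/
theorem statement11 [IsIntegrallyClosed R]
    (ι : K →+* L) (hι : ∀ r : R, ι (algebraMap R K r) = algebraMap R[X] L (C r))
    (I : Submodule R K) (hI : I ≠ ⊥) (hfrac : IsFractional (nonZeroDivisors R) I) :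
    bStarSet (Submodule.span R[X] (ι '' (I : Set K))) =
      ((Submodule.span R[X] (ι '' bStarSet I) : Submodule R[X] L) : Set L) :=
  statement11_general ι hι I
end

section
/- Let R be an integral domain, X an indeterminate over R, and * a star operation of finite character on R[X]. The following statements are equivalent: (i) *-Max(R[X]) = t-Max(R[X]); (ii) Q_t ⊊ R[X] for each *-maximal ideal Q of R[X] with Q ∩ R ≠ (0); (iii) \bar{*}-Max(R) = t-Max(R) and Q = (Q ∩ R)[X] for each *-maximal ideal Q of R[X] with Q ∩ R ≠ (0). -/
open Polynomial

/-- A *star operation* on a domain `S` with quotient field `M`: a map on the nonzero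
fractional ideals of `S` satisfying `(aI)^* = aI^*`, `I ⊆ I^*`, monotonicity,
idempotency and `S^* = S`. -/
structure IsStarOperation (S M : Type*) [CommRing S] [IsDomain S] [Field M] [Algebra S M]
    [IsFractionRing S M]
    (star : FractionalIdeal (nonZeroDivisors S) M → FractionalIdeal (nonZeroDivisors S) M) :
    Prop where
  smul_eq : ∀ a : M, a ≠ 0 → ∀ I, I ≠ 0 →
    star (FractionalIdeal.spanSingleton (nonZeroDivisors S) a * I) =
      FractionalIdeal.spanSingleton (nonZeroDivisors S) a * star I
  le_star : ∀ I, I ≠ 0 → I ≤ star I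
  mono : ∀ I J, I ≠ 0 → J ≠ 0 → I ≤ J → star I ≤ star J
  idem : ∀ I, I ≠ 0 → star (star I) = star I
  star_one : star 1 = 1

/-- A star operation has *finite character* if
`I^* = ⋃ {J^* : J nonzero finitely generated fractional ideal, J ⊆ I}`. -/
def StarFiniteCharacter (S M : Type*) [CommRing S] [IsDomain S] [Field M] [Algebra S M]
    [IsFractionRing S M]
    (star : FractionalIdeal (nonZeroDivisors S) M → FractionalIdeal (nonZeroDivisors S) M) :
    Prop :=
  ∀ I, I ≠ 0 → ∀ x : M,
    x ∈ star I ↔ ∃ J : FractionalIdeal (nonZeroDivisors S) M, J ≠ 0 ∧ (J : Submodule S M).FG ∧ J ≤ I ∧ x ∈ star J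

/-- `Q` is a `*`-maximal ideal: a proper nonzero integral `*`-ideal which is maximal
among proper integral `*`-ideals. -/
def IsStarMaximal {S M : Type*} [CommRing S] [IsDomain S] [Field M] [Algebra S M]
    [IsFractionRing S M]
    (star : FractionalIdeal (nonZeroDivisors S) M → FractionalIdeal (nonZeroDivisors S) M)
    (Q : Ideal S) : Prop :=
  Q ≠ ⊥ ∧ Q ≠ ⊤ ∧ star ↑Q = (Q : FractionalIdeal (nonZeroDivisors S) M) ∧
    ∀ J : Ideal S, J ≠ ⊥ → J ≠ ⊤ → star ↑J = (J : FractionalIdeal (nonZeroDivisors S) M) →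
      Q ≤ J → Q = J

/-- An *upper to zero* in `R[X]`: a nonzero prime ideal `Q` with `Q ∩ R = (0)`. -/
def IsUpperToZero {R : Type*} [CommRing R] [IsDomain R] (Q : Ideal R[X]) : Prop :=
  Q.IsPrime ∧ Q ≠ ⊥ ∧ Q.comap (C : R →+* R[X]) = ⊥

/-- `c(Q)`: the content of an ideal `Q` of `R[X]`, the ideal of `R` generated by the
coefficients of all elements of `Q`. -/
def contentIdeal {R : Type*} [CommRing R] (Q : Ideal R[X]) : Ideal R :=
  Ideal.span {a : R | ∃ f ∈ Q, ∃ n, f.coeff n = a}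

/-- `c(f)`: the content of a polynomial, the ideal generated by its coefficients. -/
def coeffIdeal {R : Type*} [CommRing R] (f : R[X]) : Ideal R :=
  Ideal.span {a : R | ∃ n, f.coeff n = a}

variable {R K L : Type*} [CommRing R] [IsDomain R]
  [Field K] [Algebra R K] [IsFractionRing R K]
  [Field L] [Algebra R[X] L] [IsFractionRing R[X] L]

/-- `I^{\bar{*}} = (I[X])^* ∩ K` for an integral ideal `I` of `R`, as a subset of `K`;
here `ι : K →+* L = K(X)` is the canonical embedding. -/
def barStarSet
    (star : FractionalIdeal (nonZeroDivisors R[X]) L → FractionalIdeal (nonZeroDivisors R[X]) L)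
    (ι : K →+* L) (I : Ideal R) : Set K :=
  {x : K | ι x ∈ star ((I.map (C : R →+* R[X]) : Ideal R[X]) :
      FractionalIdeal (nonZeroDivisors R[X]) L)}

/-- `I_t = ⋃ {J_v : J nonzero finitely generated fractional ideal, J ⊆ I}`, as a subset of
the quotient field, where `J_v = (S : (S : J)) = 1/(1/J)`. -/
def tSet {S M : Type*} [CommRing S] [IsDomain S] [Field M] [Algebra S M] [IsFractionRing S M]
    (I : FractionalIdeal (nonZeroDivisors S) M) : Set M :=
  ⋃ J ∈ {J : FractionalIdeal (nonZeroDivisors S) M |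
      J ≠ 0 ∧ (J : Submodule S M).FG ∧ J ≤ I},
    (((1 / (1 / J) : FractionalIdeal (nonZeroDivisors S) M) : Submodule S M) : Set M)

/-- `Q` is a `t`-maximal ideal of `S`: a proper nonzero integral `t`-ideal maximal among
proper integral `t`-ideals. -/
def IsTMaximal {S : Type*} (M : Type*) [CommRing S] [IsDomain S] [Field M] [Algebra S M]
    [IsFractionRing S M] (Q : Ideal S) : Prop :=
  Q ≠ ⊥ ∧ Q ≠ ⊤ ∧
    tSet (Q : FractionalIdeal (nonZeroDivisors S) M) =
      (((Q : FractionalIdeal (nonZeroDivisors S) M) : Submodule S M) : Set M) ∧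
    ∀ J : Ideal S, J ≠ ⊥ → J ≠ ⊤ →
      tSet (J : FractionalIdeal (nonZeroDivisors S) M) =
        (((J : FractionalIdeal (nonZeroDivisors S) M) : Submodule S M) : Set M) →
      Q ≤ J → Q = J

/-- `M` is a `\bar{*}`-maximal ideal of `R`. -/
def IsBarStarMaximal
    (star : FractionalIdeal (nonZeroDivisors R[X]) L → FractionalIdeal (nonZeroDivisors R[X]) L)
    (ι : K →+* L) (M : Ideal R) : Prop :=
  M ≠ ⊥ ∧ M ≠ ⊤ ∧ barStarSet star ι M = algebraMap R K '' (M : Set R) ∧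
    ∀ J : Ideal R, J ≠ ⊥ → J ≠ ⊤ → barStarSet star ι J = algebraMap R K '' (J : Set R) →
      M ≤ J → M = J

/-!
On integral ideals a star operation is a closure operator commuting with multiplication by principal
ideals. The largest such operator is `v`, so one of finite character lies below `t`; hence
`*-Max = t-Max` if and only if no `*`-maximal ideal `Q` satisfies `Q_t = R[X]`. A `*`-maximal ideal
is prime, and a prime `Q` with `Q ∩ R = (0)` is always a `t`-ideal because it becomes principal in
`K[X]`. If `Q ∩ R ≠ (0)` and `c(Q)_t = R`, then `c(g)_v = R` for a single `g ∈ Q`; given a nonzero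
`a ∈ Q ∩ R`, McCoy's theorem over `R/(a)` yields `(a, g)_v = R[X]`, so `Q_t = R[X]`. A `t`-maximal
`Q` with `Q ∩ R ≠ (0)` is therefore contained in, hence equal to, `P[X]` for a `t`-maximal ideal `P`
of `R`. Conversely `P[X]` is a `t`-ideal whenever `P` is.
-/

section ClosureOperators

variable {S T : Type*} [CommRing S] [CommRing T]

theorem exists_le_of_fg_of_le_iSup {ι : Type*} [Nonempty ι] {f : ι → Ideal S}
    (hf : Directed (· ≤ ·) f) {J : Ideal S} (hJ : J.FG) (h : J ≤ ⨆ i, f i) : ∃ i, J ≤ f i := by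
  have hcompact := (Submodule.fg_iff_compact J).mp hJ
  rw [CompleteLattice.isCompactElement_iff_le_of_directed_sSup_le] at hcompact
  obtain ⟨-, ⟨i, rfl⟩, hi⟩ :=
    hcompact (Set.range f) (Set.range_nonempty f) hf.directedOn_range h
  exact ⟨i, hi⟩

instance nonempty_fg_le (I : Ideal S) : Nonempty {J : Ideal S // J.FG ∧ J ≤ I} :=
  ⟨⊥, Submodule.fg_bot, bot_le⟩

theorem directed_map_fg_le {g : Ideal S → Ideal T} (hg : Monotone g) (I : Ideal S) :
    Directed (· ≤ ·) fun J : {J : Ideal S // J.FG ∧ J ≤ I} => g J := fun J J' =>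
  ⟨⟨J ⊔ J', Submodule.FG.sup J.2.1 J'.2.1, sup_le J.2.2 J'.2.2⟩, hg le_sup_left, hg le_sup_right⟩

theorem le_iSup_fg_le (I : Ideal S) : I ≤ ⨆ J : {J : Ideal S // J.FG ∧ J ≤ I}, (J : Ideal S) :=
  fun x hx => Submodule.mem_iSup_of_mem
    ⟨Ideal.span {x}, Submodule.fg_span_singleton x, (Ideal.span_singleton_le_iff_mem I).mpr hx⟩
    (Ideal.mem_span_singleton_self x)

theorem exists_fg_le_of_fg_of_le_map {f : S →+* T} {I : Ideal S} {J : Ideal T} (hJ : J.FG)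
    (h : J ≤ I.map f) : ∃ I' : Ideal S, I'.FG ∧ I' ≤ I ∧ J ≤ I'.map f := by
  have hle : J ≤ ⨆ I' : {I' : Ideal S // I'.FG ∧ I' ≤ I}, (I' : Ideal S).map f :=
    h.trans ((Ideal.map_mono (le_iSup_fg_le I)).trans_eq (Ideal.map_iSup _ _))
  obtain ⟨I', hI'⟩ :=
    exists_le_of_fg_of_le_iSup (directed_map_fg_le (fun _ _ h => Ideal.map_mono h) I) hJ hle
  exact ⟨I', I'.2.1, I'.2.2, hI'⟩

/-- A closure operator on ideals is of *finite type* if the closure of an ideal is the union of the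
closures of its finitely generated subideals. -/
def IsFiniteType (c : ClosureOperator (Ideal S)) : Prop :=
  ∀ I, ∀ s ∈ c I, ∃ J : Ideal S, J.FG ∧ J ≤ I ∧ s ∈ c J

/-- The largest finite-type closure operator below `c`: the closure of `I` is the union of the
`c`-closures of the finitely generated subideals of `I`. -/
def finiteTypeClosure (c : ClosureOperator (Ideal S)) : ClosureOperator (Ideal S) :=
  .mk₂ (fun I => ⨆ J : {J : Ideal S // J.FG ∧ J ≤ I}, c J)
    (fun I => (le_iSup_fg_le I).trans (iSup_mono fun _ => c.le_closure _))
    fun I I' h => iSup_le fun J => by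
      obtain ⟨J', hJ'⟩ := exists_le_of_fg_of_le_iSup (directed_map_fg_le c.monotone I') J.2.1
        (J.2.2.trans h)
      exact (c.le_closure_iff.mp hJ').trans (le_iSup (fun J : {J // J.FG ∧ J ≤ I'} => c J) J')

variable {c d : ClosureOperator (Ideal S)}

theorem mem_finiteTypeClosure {I : Ideal S} {s : S} :
    s ∈ finiteTypeClosure c I ↔ ∃ J : Ideal S, J.FG ∧ J ≤ I ∧ s ∈ c J := by
  refine (Submodule.mem_iSup_of_directed _ (directed_map_fg_le c.monotone I)).trans ?_
  simp only [Subtype.exists, exists_prop, and_assoc]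

theorem closure_le_finiteTypeClosure {J : Ideal S} (hJ : J.FG) : c J ≤ finiteTypeClosure c J :=
  fun _ hs => mem_finiteTypeClosure.mpr ⟨J, hJ, le_rfl, hs⟩

theorem isFiniteType_finiteTypeClosure : IsFiniteType (finiteTypeClosure c) := fun _ s hs => by
  obtain ⟨J, hJ, hJI, hsJ⟩ := mem_finiteTypeClosure.mp hs
  exact ⟨J, hJ, hJI, closure_le_finiteTypeClosure hJ hsJ⟩

theorem IsFiniteType.le_finiteTypeClosure (hc : IsFiniteType c) (hcd : ∀ I, c I ≤ d I)
    (I : Ideal S) : c I ≤ finiteTypeClosure d I := fun s hs => by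
  obtain ⟨J, hJ, hJI, hsJ⟩ := hc I s hs
  exact mem_finiteTypeClosure.mpr ⟨J, hJ, hJI, hcd J hsJ⟩

/-- `Q` is maximal among the nonzero proper `c`-closed ideals. -/
def IsMaximalClosed (c : ClosureOperator (Ideal S)) (Q : Ideal S) : Prop :=
  Maximal (fun J => J ≠ ⊥ ∧ J ≠ ⊤ ∧ c.IsClosed J) Q

theorem isMaximalClosed_iff {p : Ideal S → Prop} (hp : ∀ J, J ≠ ⊥ → (p J ↔ c.IsClosed J))
    {Q : Ideal S} :
    IsMaximalClosed c Q ↔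
      Q ≠ ⊥ ∧ Q ≠ ⊤ ∧ p Q ∧ ∀ J, J ≠ ⊥ → J ≠ ⊤ → p J → Q ≤ J → Q = J := by
  refine ⟨fun h => ⟨h.prop.1, h.prop.2.1, (hp Q h.prop.1).mpr h.prop.2.2,
      fun J hbot htop hJ hle => h.eq_of_le ⟨hbot, htop, (hp J hbot).mp hJ⟩ hle⟩, ?_⟩
  rintro ⟨hbot, htop, hQ, hmax⟩
  exact ⟨⟨hbot, htop, (hp Q hbot).mp hQ⟩, fun J hJ hle =>
    (hmax J hJ.1 hJ.2.1 ((hp J hJ.1).mpr hJ.2.2) hle).ge⟩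

namespace IsMaximalClosed

variable {Q J : Ideal S}

theorem ne_bot (h : IsMaximalClosed c Q) : Q ≠ ⊥ := h.prop.1

theorem ne_top (h : IsMaximalClosed c Q) : Q ≠ ⊤ := h.prop.2.1

theorem isClosed (h : IsMaximalClosed c Q) : c.IsClosed Q := h.prop.2.2

theorem eq_of_le (h : IsMaximalClosed c Q) (hJ : c.IsClosed J) (htop : J ≠ ⊤) (hle : Q ≤ J) :
    Q = J :=
  Maximal.eq_of_le h ⟨ne_bot_of_le_ne_bot h.ne_bot hle, htop, hJ⟩ hle

end IsMaximalClosed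

theorem IsFiniteType.isClosed_sSup (hc : IsFiniteType c) {s : Set (Ideal S)} (hs : s.Nonempty)
    (hdir : DirectedOn (· ≤ ·) s) (hclosed : ∀ J ∈ s, c.IsClosed J) : c.IsClosed (sSup s) := by
  refine c.isClosed_iff_closure_le.mpr fun x hx => ?_
  have := hs.to_subtype
  obtain ⟨J, hJ, hJs, hxJ⟩ := hc _ x hx
  rw [sSup_eq_iSup'] at hJs
  obtain ⟨K, hJK⟩ := exists_le_of_fg_of_le_iSup hdir.directed_val hJ hJs
  exact le_sSup K.2 (c.closure_min hJK (hclosed K K.2) hxJ)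

theorem IsFiniteType.exists_isMaximalClosed_ge (hc : IsFiniteType c) {I : Ideal S} (hI : I ≠ ⊥)
    (hcI : c I ≠ ⊤) : ∃ Q, IsMaximalClosed c Q ∧ I ≤ Q := by
  obtain ⟨Q, hIQ, hQ⟩ := zorn_le_nonempty₀ {J | J ≠ ⊤ ∧ c.IsClosed J} (fun s hs hchain J hJ => by
    refine ⟨sSup s, ⟨fun htop => ?_, hc.isClosed_sSup ⟨J, hJ⟩ hchain.directedOn
      fun K hK => (hs hK).2⟩, fun K hK => le_sSup hK⟩
    obtain ⟨K, hK, h1⟩ := (Submodule.mem_sSup_of_directed ⟨J, hJ⟩ hchain.directedOn).mp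
      ((Ideal.eq_top_iff_one _).mp htop)
    exact (hs hK).1 ((Ideal.eq_top_iff_one _).mpr h1)) (c I) ⟨hcI, c.isClosed_closure I⟩
  have hle := (c.le_closure I).trans hIQ
  exact ⟨Q, ⟨⟨ne_bot_of_le_ne_bot hI hle, hQ.prop⟩, fun J hJ => hQ.le_of_ge hJ.2⟩, hle⟩

theorem IsFiniteType.isMaximalClosed_iff_forall_closure_ne_top (hc : IsFiniteType c)
    (hcd : ∀ I, c I ≤ d I) :
    (∀ Q, IsMaximalClosed c Q ↔ IsMaximalClosed d Q) ↔ ∀ Q, IsMaximalClosed c Q → d Q ≠ ⊤ := by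
  refine ⟨fun h Q hQ => ?_, fun h => ?_⟩
  · have hd := (h Q).mp hQ
    exact hd.isClosed.closure_eq.trans_ne hd.ne_top
  have isClosed_of_isClosed {J} (hJ : d.IsClosed J) : c.IsClosed J :=
    c.isClosed_iff_closure_le.mpr ((hcd J).trans hJ.closure_eq.le)
  have maximal_of_maximal {Q} (hQ : IsMaximalClosed c Q) : IsMaximalClosed d Q := by
    have hQd : Q = d Q :=
      hQ.eq_of_le (isClosed_of_isClosed (d.isClosed_closure Q)) (h Q hQ) (d.le_closure Q)
    exact ⟨⟨hQ.ne_bot, hQ.ne_top, d.isClosed_iff.mpr hQd.symm⟩, fun J hJ hle =>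
      (hQ.eq_of_le (isClosed_of_isClosed hJ.2.2) hJ.2.1 hle).ge⟩
  refine fun Q => ⟨maximal_of_maximal, fun hQ => ?_⟩
  have hcQ : c Q ≠ ⊤ := (isClosed_of_isClosed hQ.isClosed).closure_eq.trans_ne hQ.ne_top
  obtain ⟨Q', hQ', hle⟩ := hc.exists_isMaximalClosed_ge hQ.ne_bot hcQ
  have hdQ' := maximal_of_maximal hQ'
  rwa [hQ.eq_of_le hdQ'.isClosed hdQ'.ne_top hle]

/-- The closure operator `I ↦ c (I T) ∩ S` induced along a ring homomorphism `f : S → T`. -/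
def contractClosure (f : S →+* T) (c : ClosureOperator (Ideal T)) : ClosureOperator (Ideal S) :=
  .mk₂ (fun I => (c (I.map f)).comap f)
    (fun _ => Ideal.map_le_iff_le_comap.mp (c.le_closure _))
    fun _ _ h => Ideal.comap_mono (c.le_closure_iff.mp (Ideal.map_le_iff_le_comap.mpr h))

theorem contractClosure_apply (f : S →+* T) (c : ClosureOperator (Ideal T)) (I : Ideal S) :
    contractClosure f c I = (c (I.map f)).comap f := rfl

protected theorem IsFiniteType.contractClosure {c : ClosureOperator (Ideal T)} (hc : IsFiniteType c)
    (f : S →+* T) : IsFiniteType (contractClosure f c) := fun I s hs => by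
  obtain ⟨J, hJ, hJI, hsJ⟩ := hc _ _ hs
  obtain ⟨I', hI', hI'I, hJI'⟩ := exists_fg_le_of_fg_of_le_map hJ hJI
  exact ⟨I', hI', hI'I, c.monotone hJI' hsJ⟩

theorem IsMaximalClosed.of_map {f : S →+* T} {c : ClosureOperator (Ideal T)} {P : Ideal S}
    (hP : (P.map f).comap f = P) (h : IsMaximalClosed c (P.map f)) :
    IsMaximalClosed (contractClosure f c) P := by
  have hbot : P ≠ ⊥ := fun h' => h.ne_bot (by rw [h', Ideal.map_bot])
  have htop : P ≠ ⊤ := fun h' => h.ne_top (by rw [h', Ideal.map_top])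
  have hclosed : contractClosure f c P = P := by
    rw [contractClosure_apply, h.isClosed.closure_eq, hP]
  refine ⟨⟨hbot, htop, (ClosureOperator.isClosed_iff _).mpr hclosed⟩,
    fun J ⟨_, hJtop, hJ⟩ hle => ?_⟩
  have hcJ : c (J.map f) ≠ ⊤ := fun h' => hJtop <| by
    rw [← hJ.closure_eq, contractClosure_apply, h', Ideal.comap_top]
  have heq : P.map f = c (J.map f) :=
    h.eq_of_le (c.isClosed_closure _) hcJ ((Ideal.map_mono hle).trans (c.le_closure _))
  exact (Ideal.map_le_iff_le_comap.mp ((c.le_closure _).trans_eq heq.symm)).trans_eq hP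

/-- The closure operators on integral ideals that correspond to star operations, with the
convention `c ⊥ = ⊥`. -/
def IsStarClosure (c : ClosureOperator (Ideal S)) : Prop :=
  ∀ b I, c (Ideal.span {b} * I) = Ideal.span {b} * c I

namespace IsStarClosure

theorem closure_span_singleton (hc : IsStarClosure c) (b : S) :
    c (Ideal.span {b}) = Ideal.span {b} := by
  simpa only [Ideal.mul_top, c.closure_top] using hc b ⊤

theorem isPrime_of_isMaximalClosed (hc : IsStarClosure c) {Q : Ideal S}
    (hQ : IsMaximalClosed c Q) : Q.IsPrime := by
  refine ⟨hQ.ne_top, fun {a b} hab => or_iff_not_imp_left.mpr fun ha => ?_⟩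
  have htop : c (Q ⊔ Ideal.span {a}) = ⊤ := by
    by_contra hne
    have heq := hQ.eq_of_le (c.isClosed_closure _) hne (le_sup_left.trans (c.le_closure _))
    exact ha (heq ▸ c.le_closure _ (Ideal.mem_sup_right (Ideal.mem_span_singleton_self a)))
  have hle : Ideal.span {b} * (Q ⊔ Ideal.span {a}) ≤ Q := by
    rw [Ideal.mul_sup, Ideal.span_singleton_mul_span_singleton, mul_comm b a]
    exact sup_le Ideal.mul_le_right ((Ideal.span_singleton_le_iff_mem Q).mpr hab)
  rw [← Ideal.span_singleton_le_iff_mem, ← Ideal.mul_top (Ideal.span {b}), ← htop, ← hc]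
  exact c.closure_min hle hQ.isClosed

end IsStarClosure

/-- The `v`-operation on integral ideals: the intersection of the integral parts of the
principal fractional ideals `(q / p)` containing `I`, written without fractions. A pair with
`p = 0` imposes no condition; allowing `q = 0` makes `⊥` closed in a domain. -/
def vClosure : ClosureOperator (Ideal S) :=
  .mk₂ (fun I => ⨅ (p : S) (q : S) (_ : I ≤ (Ideal.span {q}).colon {p}), (Ideal.span {q}).colon {p})
    (fun _ => le_iInf₂ fun _ _ => le_iInf id)
    fun _ _ h => le_iInf₂ fun p q => le_iInf fun hpq =>
      iInf₂_le_of_le p q (iInf_le _ (h.trans (iInf₂_le_of_le p q (iInf_le _ hpq))))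

theorem mem_colon_span_singleton {p q s : S} :
    s ∈ (Ideal.span {q}).colon {p} ↔ q ∣ s * p := by
  rw [Submodule.mem_colon_singleton, smul_eq_mul, Ideal.mem_span_singleton]

theorem mem_vClosure {I : Ideal S} {s : S} :
    s ∈ vClosure I ↔ ∀ p q : S, I ≤ (Ideal.span {q}).colon {p} → q ∣ s * p := by
  simp only [vClosure, ClosureOperator.mk₂_apply, Submodule.mem_iInf, mem_colon_span_singleton]

theorem vClosure_eq_top_iff {I : Ideal S} :
    vClosure I = ⊤ ↔ ∀ p q : S, I ≤ (Ideal.span {q}).colon {p} → q ∣ p := by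
  simp only [Ideal.eq_top_iff_one, mem_vClosure, one_mul]

theorem IsStarClosure.le_vClosure (hc : IsStarClosure c) (I : Ideal S) : c I ≤ vClosure I :=
  fun s hs => mem_vClosure.mpr fun p q hpq => by
    have hle : Ideal.span {p} * I ≤ Ideal.span {q} := Ideal.span_singleton_mul_le_iff.mpr
      fun x hx => mul_comm x p ▸ Submodule.mem_colon_singleton.mp (hpq hx)
    have hsp : p * s ∈ c (Ideal.span {p} * I) := by
      rw [hc]
      exact Ideal.mul_mem_mul (Ideal.mem_span_singleton_self p) hs
    rw [mul_comm, ← Ideal.mem_span_singleton, ← hc.closure_span_singleton]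
    exact c.monotone hle hsp

/-- The `t`-operation on integral ideals. -/
def tClosure : ClosureOperator (Ideal S) :=
  finiteTypeClosure vClosure

theorem mem_tClosure {I : Ideal S} {s : S} :
    s ∈ tClosure I ↔ ∃ J : Ideal S, J.FG ∧ J ≤ I ∧ s ∈ vClosure J :=
  mem_finiteTypeClosure

theorem isFiniteType_tClosure : IsFiniteType (tClosure (S := S)) :=
  isFiniteType_finiteTypeClosure

theorem tClosure_eq_top_of_le {I J : Ideal S} (hJ : J.FG) (hle : J ≤ I) (h : vClosure J = ⊤) :
    tClosure I = ⊤ :=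
  (Ideal.eq_top_iff_one _).mpr (mem_tClosure.mpr ⟨J, hJ, hle, h ▸ Submodule.mem_top⟩)

theorem IsFiniteType.le_tClosure (hc : IsFiniteType c) (hstar : IsStarClosure c) (I : Ideal S) :
    c I ≤ tClosure I :=
  hc.le_finiteTypeClosure hstar.le_vClosure I

end ClosureOperators

section Polynomials

variable {A : Type*} [CommRing A]

theorem comap_C_map_C (I : Ideal A) : (I.map (C : A →+* A[X])).comap C = I :=
  Ideal.ext fun a => ⟨fun h => by simpa using Ideal.mem_map_C_iff.mp h 0, Ideal.mem_map_of_mem _⟩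

theorem map_C_ne_bot {I : Ideal A} (h : I ≠ ⊥) : I.map (C : A →+* A[X]) ≠ ⊥ :=
  (Ideal.map_eq_bot_iff_of_injective C_injective).not.mpr h

theorem map_C_ne_top {I : Ideal A} (h : I ≠ ⊤) : I.map (C : A →+* A[X]) ≠ ⊤ := fun h' =>
  h <| by rw [← comap_C_map_C I, h', Ideal.comap_top]

theorem map_C_colon_span_singleton (p q : A) :
    ((Ideal.span {q}).colon {p}).map (C : A →+* A[X]) = (Ideal.span {C q}).colon {C p} := by
  ext g
  simp only [Ideal.mem_map_C_iff, mem_colon_span_singleton, C_dvd_iff_dvd_coeff, coeff_mul_C]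

theorem vClosure_map_C_le (I : Ideal A) :
    vClosure (I.map (C : A →+* A[X])) ≤ (vClosure I).map C := fun g hg => by
  refine Ideal.mem_map_C_iff.mpr fun n => mem_vClosure.mpr fun p q hpq => ?_
  have hle : I.map (C : A →+* A[X]) ≤ (Ideal.span {C q}).colon {C p} :=
    (Ideal.map_mono hpq).trans_eq (map_C_colon_span_singleton p q)
  have hdvd : C q ∣ g * C p := mem_vClosure.mp hg (C p) (C q) hle
  simpa only [coeff_mul_C] using (C_dvd_iff_dvd_coeff _ _).mp hdvd n

theorem tClosure_map_C_le (I : Ideal A) :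
    tClosure (I.map (C : A →+* A[X])) ≤ (tClosure I).map C := fun g hg => by
  obtain ⟨J, hJ, hJI, hgJ⟩ := mem_tClosure.mp hg
  obtain ⟨I', hI', hI'I, hJI'⟩ := exists_fg_le_of_fg_of_le_map hJ hJI
  exact Ideal.map_mono (fun _ hx => mem_tClosure.mpr ⟨I', hI', hI'I, hx⟩)
    (vClosure_map_C_le I' (vClosure.monotone hJI' hgJ))

theorem isClosed_tClosure_map_C {I : Ideal A} (h : tClosure.IsClosed I) :
    tClosure.IsClosed (I.map (C : A →+* A[X])) :=
  tClosure.isClosed_iff_closure_le.mpr ((tClosure_map_C_le I).trans_eq (by rw [h.closure_eq]))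

theorem IsFiniteType.contractClosure_C_le_tClosure {c : ClosureOperator (Ideal A[X])}
    (hc : IsFiniteType c) (hstar : IsStarClosure c) (I : Ideal A) :
    contractClosure C c I ≤ tClosure I :=
  calc (c (I.map C)).comap C ≤ ((tClosure I).map C).comap C :=
        Ideal.comap_mono ((hc.le_tClosure hstar _).trans (tClosure_map_C_le I))
    _ = tClosure I := comap_C_map_C _

theorem polynomial_contentIdeal_le_iff {f : A[X]} {I : Ideal A} :
    f.contentIdeal ≤ I ↔ f ∈ I.map C := by
  rw [Ideal.mem_map_C_iff]
  refine ⟨fun h n => h (f.coeff_mem_contentIdeal n), fun h => Ideal.span_le.mpr fun a ha => ?_⟩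
  obtain ⟨n, -, rfl⟩ := mem_coeffs_iff.mp ha
  exact h n

theorem contentIdeal_le_iff {Q : Ideal A[X]} {I : Ideal A} :
    _root_.contentIdeal Q ≤ I ↔ Q ≤ I.map C := by
  refine Ideal.span_le.trans ⟨fun h f hf => Ideal.mem_map_C_iff.mpr fun n => h ⟨f, hf, n, rfl⟩, ?_⟩
  rintro h _ ⟨f, hf, n, rfl⟩
  exact Ideal.mem_map_C_iff.mp (h hf) n

theorem contentIdeal_eq_iSup (Q : Ideal A[X]) :
    _root_.contentIdeal Q = ⨆ f : Q, (f : A[X]).contentIdeal :=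
  eq_of_forall_ge_iff fun I => by
    simp only [contentIdeal_le_iff, iSup_le_iff, polynomial_contentIdeal_le_iff, Subtype.forall]
    rfl

-- Shifting `g` past the degree of `f` prevents any cancellation of coefficients.
theorem contentIdeal_sup_le_contentIdeal_add_X_pow_mul (f g : A[X]) :
    f.contentIdeal ⊔ g.contentIdeal ≤ (f + X ^ (f.natDegree + 1) * g).contentIdeal := by
  set I := (f + X ^ (f.natDegree + 1) * g).contentIdeal
  have hcoeff : ∀ n, (f + X ^ (f.natDegree + 1) * g).coeff n ∈ I :=
    (f + X ^ (f.natDegree + 1) * g).coeff_mem_contentIdeal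
  refine sup_le (polynomial_contentIdeal_le_iff.mpr (Ideal.mem_map_C_iff.mpr fun n => ?_))
    (polynomial_contentIdeal_le_iff.mpr (Ideal.mem_map_C_iff.mpr fun n => ?_))
  · obtain hn | hn := le_or_gt n f.natDegree
    · simpa [coeff_X_pow_mul', hn.not_gt, Nat.lt_succ_of_le hn] using hcoeff n
    · simp [coeff_eq_zero_of_natDegree_lt hn]
  · have hf : f.coeff (n + (f.natDegree + 1)) = 0 := coeff_eq_zero_of_natDegree_lt (by lia)
    simpa [hf] using hcoeff (n + (f.natDegree + 1))

theorem exists_le_contentIdeal_of_fg {Q : Ideal A[X]} {J : Ideal A} (hJ : J.FG)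
    (h : J ≤ _root_.contentIdeal Q) : ∃ g ∈ Q, J ≤ g.contentIdeal := by
  have hdir : Directed (· ≤ ·) fun f : Q => (f : A[X]).contentIdeal := fun f g =>
    have hsup := sup_le_iff.mp (contentIdeal_sup_le_contentIdeal_add_X_pow_mul (f : A[X]) g)
    ⟨⟨_, Q.add_mem f.2 (Q.mul_mem_left (X ^ ((f : A[X]).natDegree + 1)) g.2)⟩, hsup⟩
  obtain ⟨g, hg⟩ := exists_le_of_fg_of_le_iSup hdir hJ (h.trans_eq (contentIdeal_eq_iSup Q))
  exact ⟨g, g.2, hg⟩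

theorem C_dvd_iff_map_mk_eq_zero {a : A} {f : A[X]} :
    C a ∣ f ↔ f.map (Ideal.Quotient.mk (Ideal.span {a})) = 0 := by
  simp only [C_dvd_iff_dvd_coeff, Polynomial.ext_iff, coeff_map, coeff_zero,
    Ideal.Quotient.eq_zero_iff_dvd]

-- By McCoy's theorem, a zero divisor in `(A ⧸ (a))[X]` is killed by a nonzero constant.
theorem C_dvd_of_C_dvd_mul_of_vClosure_contentIdeal_eq_top {a : A} {g h : A[X]}
    (hg : vClosure g.contentIdeal = ⊤) (hgh : C a ∣ g * h) : C a ∣ h := by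
  have hregular : g.map (Ideal.Quotient.mk (Ideal.span {a})) ∈ nonZeroDivisors _ := by
    by_contra hzd
    obtain ⟨r', hr', hzero⟩ := Polynomial.notMem_nonZeroDivisors_iff.mp hzd
    obtain ⟨r, rfl⟩ := Ideal.Quotient.mk_surjective r'
    have hrg : C a ∣ g * C r := by
      rw [C_dvd_iff_map_mk_eq_zero, Polynomial.map_mul, map_C, mul_comm, ← smul_eq_C_mul, hzero]
    have hcontent : g.contentIdeal ≤ (Ideal.span {a}).colon {r} := by
      rwa [polynomial_contentIdeal_le_iff, map_C_colon_span_singleton, mem_colon_span_singleton]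
    have har : a ∣ r := vClosure_eq_top_iff.mp hg r a hcontent
    exact hr' ((Ideal.Quotient.eq_zero_iff_dvd _ _).mpr har)
  rw [C_dvd_iff_map_mk_eq_zero, Polynomial.map_mul, mul_comm] at hgh
  exact C_dvd_iff_map_mk_eq_zero.mpr ((mem_nonZeroDivisors_iff_right.mp hregular) _ hgh)

end Polynomials

section Domains

variable {A : Type*} [CommRing A] [IsDomain A]

theorem vClosure_span_pair_eq_top {a : A} {g : A[X]} (ha : a ≠ 0)
    (hg : vClosure g.contentIdeal = ⊤) : vClosure (Ideal.span {C a, g}) = ⊤ := by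
  have hCa : C a ≠ 0 := C_ne_zero.mpr ha
  refine vClosure_eq_top_iff.mpr fun p q hpq => ?_
  have ha_mem : C a ∈ Ideal.span {C a, g} := Ideal.subset_span (Set.mem_insert _ _)
  have hg_mem : g ∈ Ideal.span {C a, g} := Ideal.subset_span (Set.mem_insert_of_mem _ rfl)
  obtain ⟨h, hh : C a * p = q * h⟩ := mem_colon_span_singleton.mp (hpq ha_mem)
  obtain ⟨k, hk : g * p = q * k⟩ := mem_colon_span_singleton.mp (hpq hg_mem)
  obtain rfl | hq := eq_or_ne q 0
  · simpa [hCa] using hh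
  have hgh : g * h = C a * k := mul_left_cancel₀ hq (by linear_combination C a * hk - g * hh)
  obtain ⟨m, rfl⟩ := C_dvd_of_C_dvd_mul_of_vClosure_contentIdeal_eq_top hg (Dvd.intro k hgh.symm)
  exact ⟨m, mul_left_cancel₀ hCa (by linear_combination hh)⟩

theorem tClosure_eq_top_of_tClosure_contentIdeal {Q : Ideal A[X]} (hQ : Q.comap C ≠ ⊥)
    (h : tClosure (_root_.contentIdeal Q) = ⊤) : tClosure Q = ⊤ := by
  obtain ⟨J, hJ, hJQ, h1⟩ := mem_tClosure.mp ((Ideal.eq_top_iff_one _).mp h)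
  obtain ⟨g, hgQ, hJg⟩ := exists_le_contentIdeal_of_fg hJ hJQ
  have hg : vClosure g.contentIdeal = ⊤ :=
    (Ideal.eq_top_iff_one _).mpr (vClosure.monotone hJg h1)
  obtain ⟨a, haQ, ha⟩ := Submodule.exists_mem_ne_zero_of_ne_bot hQ
  exact tClosure_eq_top_of_le (Submodule.fg_span (Set.toFinite _))
    (Ideal.span_le.mpr (Set.insert_subset haQ (Set.singleton_subset_iff.mpr hgQ)))
    (vClosure_span_pair_eq_top ha hg)

end Domains

section UppersToZero

theorem exists_forall_mem_exists_dvd_mul_of_isPrincipal_map {S : Type*} (T : Type*) [CommRing S]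
    [CommRing T] [Algebra S T] (M : Submonoid S) [IsLocalization M T] {Q : Ideal S}
    (hQ : (Q.map (algebraMap S T)).IsPrincipal) : ∃ f ∈ Q, ∀ g ∈ Q, ∃ m ∈ M, f ∣ g * m := by
  obtain ⟨x, hx : Q.map (algebraMap S T) = Ideal.span {x}⟩ := hQ
  obtain ⟨⟨f, m⟩, hf⟩ := (IsLocalization.mem_map_algebraMap_iff M T).mp
    (hx ▸ Ideal.mem_span_singleton_self x)
  refine ⟨f, f.2, fun g hg => ?_⟩
  have hmap : Q.map (algebraMap S T) = (Ideal.span {(f : S)}).map (algebraMap S T) := by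
    rw [hx, Ideal.map_span, Set.image_singleton, ← hf,
      Ideal.span_singleton_mul_right_unit (IsLocalization.map_units T m)]
  obtain ⟨⟨s, m₁⟩, hs⟩ := (IsLocalization.mem_map_algebraMap_iff M T).mp
    (hmap ▸ Ideal.mem_map_of_mem (algebraMap S T) hg)
  rw [← map_mul, IsLocalization.eq_iff_exists M] at hs
  obtain ⟨m₂, hm₂⟩ := hs
  refine ⟨m₂ * m₁, M.mul_mem m₂.2 m₁.2, ?_⟩
  rw [mul_left_comm, hm₂]
  exact (Ideal.mem_span_singleton.mp s.2).mul_left _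

theorem isClosed_tClosure_of_isPrincipal_map {S : Type*} (T : Type*) [CommRing S]
    [CommRing T] [Algebra S T] (M : Submonoid S) [IsLocalization M T] {Q : Ideal S} [Q.IsPrime]
    (hM : ∀ m ∈ M, m ∉ Q) (hQ : (Q.map (algebraMap S T)).IsPrincipal) : tClosure.IsClosed Q := by
  refine tClosure.isClosed_iff_closure_le.mpr fun s hs => ?_
  obtain ⟨f, hfQ, hf⟩ := exists_forall_mem_exists_dvd_mul_of_isPrincipal_map T M hQ
  obtain ⟨J, hJ, hJQ, hsJ⟩ := mem_tClosure.mp hs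
  have hdir : Directed (· ≤ ·) fun m : M => (Ideal.span {f}).colon {(m : S)} := fun m m' =>
    ⟨m * m', fun x hx => by
      rw [mem_colon_span_singleton, Submonoid.coe_mul, ← mul_assoc]
      exact (mem_colon_span_singleton.mp hx).mul_right _, fun x hx => by
      rw [mem_colon_span_singleton, Submonoid.coe_mul, mul_left_comm]
      exact (mem_colon_span_singleton.mp hx).mul_left _⟩
  have hJle : J ≤ ⨆ m : M, (Ideal.span {f}).colon {(m : S)} := fun g hg => by
    obtain ⟨m, hm, hfg⟩ := hf g (hJQ hg)
    exact Submodule.mem_iSup_of_mem ⟨m, hm⟩ (mem_colon_span_singleton.mpr hfg)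
  obtain ⟨m, hJm⟩ := exists_le_of_fg_of_le_iSup hdir hJ hJle
  have hsm : s * m ∈ Q := Q.mem_of_dvd (mem_vClosure.mp hsJ m f hJm) hfQ
  exact (Ideal.IsPrime.mem_or_mem ‹_› hsm).resolve_right (hM m m.2)

theorem isClosed_tClosure_of_comap_C_eq_bot {A : Type*} [CommRing A] [IsDomain A] {Q : Ideal A[X]}
    [Q.IsPrime] (h : Q.comap C = ⊥) : tClosure.IsClosed Q := by
  let _ := Polynomial.algebra A (FractionRing A)
  have := Polynomial.isLocalization (nonZeroDivisors A) (FractionRing A)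
  refine isClosed_tClosure_of_isPrincipal_map (FractionRing A)[X]
    ((nonZeroDivisors A).map (C : A →+* A[X])) ?_ (IsPrincipalIdealRing.principal _)
  rintro _ ⟨a, ha, rfl⟩ haQ
  exact nonZeroDivisors.ne_zero ha ((Submodule.mem_bot A).mp (h ▸ haQ : a ∈ (⊥ : Ideal A)))

end UppersToZero

section MaximalClosed

variable {A : Type*} [CommRing A] [IsDomain A]

theorem exists_isMaximalClosed_tClosure_map_C_eq {Q : Ideal A[X]}
    (hQ : IsMaximalClosed tClosure Q) (h : Q.comap C ≠ ⊥) :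
    ∃ P : Ideal A, IsMaximalClosed tClosure P ∧ P.map C = Q := by
  have hcontent : tClosure (_root_.contentIdeal Q) ≠ ⊤ := fun htop =>
    hQ.ne_top (hQ.isClosed.closure_eq.symm.trans (tClosure_eq_top_of_tClosure_contentIdeal h htop))
  have hne : _root_.contentIdeal Q ≠ ⊥ := fun hbot =>
    hQ.ne_bot (le_bot_iff.mp ((contentIdeal_le_iff.mp hbot.le).trans_eq Ideal.map_bot))
  obtain ⟨P, hP, hle⟩ := isFiniteType_tClosure.exists_isMaximalClosed_ge hne hcontent
  exact ⟨P, hP, (hQ.eq_of_le (isClosed_tClosure_map_C hP.isClosed) (map_C_ne_top hP.ne_top)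
    (contentIdeal_le_iff.mp hle)).symm⟩

variable {c : ClosureOperator (Ideal A[X])}

theorem isMaximalClosed_iff_tClosure_iff_forall_tClosure_ne_top (hc : IsFiniteType c)
    (hstar : IsStarClosure c) :
    (∀ Q, IsMaximalClosed c Q ↔ IsMaximalClosed tClosure Q) ↔
      ∀ Q, IsMaximalClosed c Q → Q.comap C ≠ ⊥ → tClosure Q ≠ ⊤ := by
  rw [hc.isMaximalClosed_iff_forall_closure_ne_top (hc.le_tClosure hstar)]
  refine forall₂_congr fun Q hQ => ⟨fun h _ => h, fun h => ?_⟩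
  by_cases hbot : Q.comap C = ⊥
  · have := hstar.isPrime_of_isMaximalClosed hQ
    exact (isClosed_tClosure_of_comap_C_eq_bot hbot).closure_eq.trans_ne hQ.ne_top
  · exact h hbot

theorem isMaximalClosed_contractClosure_iff_of_isMaximalClosed_iff (hc : IsFiniteType c)
    (hstar : IsStarClosure c) (h : ∀ Q, IsMaximalClosed c Q ↔ IsMaximalClosed tClosure Q) :
    ∀ P : Ideal A, IsMaximalClosed (contractClosure C c) P ↔ IsMaximalClosed tClosure P := by
  refine ((hc.contractClosure C).isMaximalClosed_iff_forall_closure_ne_top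
    (hc.contractClosure_C_le_tClosure hstar)).mpr fun P hP => ?_
  have hcP : c (P.map C) ≠ ⊤ := fun htop => hP.ne_top <| by
    rw [← hP.isClosed.closure_eq, contractClosure_apply, htop, Ideal.comap_top]
  obtain ⟨Q, hQ, hPQ⟩ := hc.exists_isMaximalClosed_ge (map_C_ne_bot hP.ne_bot) hcP
  have hPQ' : P ≤ Q.comap C := Ideal.map_le_iff_le_comap.mp hPQ
  obtain ⟨P', hP', rfl⟩ := exists_isMaximalClosed_tClosure_map_C_eq ((h Q).mp hQ)
    (ne_bot_of_le_ne_bot hP.ne_bot hPQ')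
  rw [comap_C_map_C] at hPQ'
  exact ne_top_of_le_ne_top hP'.ne_top (tClosure.closure_min hPQ' hP'.isClosed)

theorem isMaximalClosed_iff_tClosure_iff_contractClosure (hc : IsFiniteType c)
    (hstar : IsStarClosure c) :
    (∀ Q, IsMaximalClosed c Q ↔ IsMaximalClosed tClosure Q) ↔
      (∀ P : Ideal A, IsMaximalClosed (contractClosure C c) P ↔ IsMaximalClosed tClosure P) ∧
        ∀ Q, IsMaximalClosed c Q → Q.comap C ≠ ⊥ → Q = (Q.comap C).map C := by
  refine ⟨fun h => ⟨isMaximalClosed_contractClosure_iff_of_isMaximalClosed_iff hc hstar h,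
    fun Q hQ hne => ?_⟩, fun ⟨hmax, hextended⟩ => ?_⟩
  · obtain ⟨P, -, rfl⟩ := exists_isMaximalClosed_tClosure_map_C_eq ((h Q).mp hQ) hne
    rw [comap_C_map_C]
  · refine (isMaximalClosed_iff_tClosure_iff_forall_tClosure_ne_top hc hstar).mpr
      fun Q hQ hne => ?_
    have hQP := hextended Q hQ hne
    have hP := (hmax _).mp (IsMaximalClosed.of_map (comap_C_map_C _) (hQP ▸ hQ))
    have hclosed : tClosure.IsClosed Q := hQP ▸ isClosed_tClosure_map_C hP.isClosed
    exact hclosed.closure_eq.trans_ne hQ.ne_top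

end MaximalClosed

section FractionalIdeals

open FractionalIdeal

section IntegralIdeals

variable {S M : Type*} [CommRing S] [Field M] [Algebra S M]

theorem coe_coeIdeal_eq_image (I : Ideal S) :
    (((I : FractionalIdeal (nonZeroDivisors S) M) : Submodule S M) : Set M) =
      algebraMap S M '' I :=
  rfl

variable [IsFractionRing S M]

theorem exists_fg_coeIdeal_eq {I : Ideal S} {J : FractionalIdeal (nonZeroDivisors S) M}
    (hJ : (J : Submodule S M).FG) (hle : J ≤ I) :
    ∃ J' : Ideal S, J'.FG ∧ J' ≤ I ∧ (J' : FractionalIdeal (nonZeroDivisors S) M) = J := by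
  obtain ⟨J', rfl⟩ := le_one_iff_exists_coeIdeal.mp (hle.trans FractionalIdeal.coeIdeal_le_one)
  exact ⟨J', (coeIdeal_fg _ (IsFractionRing.injective S M) J').mp hJ,
    (coeIdeal_le_coeIdeal M).mp hle, rfl⟩

theorem div_algebraMap_mem_one_iff {p q : S} (hq : q ≠ 0) :
    algebraMap S M p / algebraMap S M q ∈ (1 : FractionalIdeal (nonZeroDivisors S) M) ↔ q ∣ p := by
  have hq' : algebraMap S M q ≠ 0 := IsFractionRing.to_map_eq_zero_iff.not.mpr hq
  simp only [mem_one_iff, eq_div_iff hq', ← map_mul, (IsFractionRing.injective S M).eq_iff]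
  exact ⟨fun ⟨r, hr⟩ => ⟨r, by rw [← hr, mul_comm]⟩, fun ⟨r, hr⟩ => ⟨r, by rw [hr, mul_comm]⟩⟩

end IntegralIdeals

variable {S M : Type*} [CommRing S] [IsDomain S] [Field M] [Algebra S M] [IsFractionRing S M]
  {star : FractionalIdeal (nonZeroDivisors S) M → FractionalIdeal (nonZeroDivisors S) M}

theorem IsStarOperation.coeIdeal_le_one (h : IsStarOperation S M star) {I : Ideal S} (hI : I ≠ ⊥) :
    star (I : FractionalIdeal (nonZeroDivisors S) M) ≤ 1 :=
  (h.mono _ _ (coeIdeal_ne_zero.mpr hI) one_ne_zero FractionalIdeal.coeIdeal_le_one).trans_eq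
    h.star_one

open Classical in
/-- The action of a star operation on integral ideals, extended by `⊥ ↦ ⊥` since a star
operation is unconstrained at `0`. -/
noncomputable def starClosure (h : IsStarOperation S M star) : ClosureOperator (Ideal S) :=
  .mk₂ (fun I => if I = ⊥ then ⊥ else
      (star (I : FractionalIdeal (nonZeroDivisors S) M) : Submodule S M).comap
        (Algebra.linearMap S M))
    (fun I => by
      split_ifs with hI
      · exact hI.le
      · exact fun s hs => h.le_star _ (coeIdeal_ne_zero.mpr hI) (mem_coeIdeal_of_mem _ hs))
    (fun I J hIJ => by
      by_cases hI : I = ⊥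
      · simp only [hI, if_true, bot_le]
      have hJ : J ≠ ⊥ := by
        rintro rfl
        exact hI (le_bot_iff.mp (by simpa only [if_true] using hIJ))
      simp only [if_neg hI, if_neg hJ] at hIJ ⊢
      have hI' := coeIdeal_ne_zero (K := M).mpr hI
      have hle : (I : FractionalIdeal (nonZeroDivisors S) M) ≤ star J := fun x hx => by
        obtain ⟨s, hs, rfl⟩ := (mem_coeIdeal _).mp hx
        exact hIJ hs
      have hstar := h.mono _ _ hI' (ne_bot_of_le_ne_bot hI' hle) hle
      rw [h.idem _ (coeIdeal_ne_zero.mpr hJ)] at hstar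
      exact Submodule.comap_mono hstar)

section StarClosure

variable (h : IsStarOperation S M star) {I : Ideal S}

theorem starClosure_bot : starClosure h ⊥ = ⊥ := if_pos rfl

theorem mem_starClosure (hI : I ≠ ⊥) {s : S} :
    s ∈ starClosure h I ↔ algebraMap S M s ∈ star (I : FractionalIdeal (nonZeroDivisors S) M) := by
  simp only [starClosure, ClosureOperator.mk₂_apply, if_neg hI]
  rfl

theorem coe_starClosure (hI : I ≠ ⊥) :
    (starClosure h I : FractionalIdeal (nonZeroDivisors S) M) = star I := by
  ext x
  rw [mem_coeIdeal]
  constructor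
  · rintro ⟨s, hs, rfl⟩
    exact (mem_starClosure h hI).mp hs
  · intro hx
    obtain ⟨s, rfl⟩ := (mem_one_iff _).mp (h.coeIdeal_le_one hI hx)
    exact ⟨s, (mem_starClosure h hI).mpr hx, rfl⟩

theorem isStarClosure_starClosure : IsStarClosure (starClosure h) := fun b I => by
  obtain rfl | hI := eq_or_ne I ⊥
  · simp only [Ideal.mul_bot, starClosure_bot]
  obtain rfl | hb := eq_or_ne b 0
  · simp only [Ideal.span_singleton_zero, Ideal.bot_mul, starClosure_bot]
  have hspan_ne : Ideal.span {b} ≠ ⊥ := Ideal.span_singleton_eq_bot.not.mpr hb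
  have hmap_ne : algebraMap S M b ≠ 0 := IsFractionRing.to_map_eq_zero_iff.not.mpr hb
  rw [← coeIdeal_inj (K := M), coe_starClosure h (mul_ne_zero hspan_ne hI), coeIdeal_mul,
    coeIdeal_mul, coe_starClosure h hI, coeIdeal_span_singleton,
    h.smul_eq _ hmap_ne _ (coeIdeal_ne_zero.mpr hI)]

theorem isFiniteType_starClosure (hfc : StarFiniteCharacter S M star) :
    IsFiniteType (starClosure h) := fun I s hs => by
  obtain rfl | hI := eq_or_ne I ⊥
  · exact ⟨⊥, Submodule.fg_bot, le_rfl, hs⟩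
  obtain ⟨J, hJ, hfg, hle, hsJ⟩ :=
    (hfc _ (coeIdeal_ne_zero.mpr hI) _).mp ((mem_starClosure h hI).mp hs)
  obtain ⟨J', hfg', hle', rfl⟩ := exists_fg_coeIdeal_eq hfg hle
  exact ⟨J', hfg', hle', (mem_starClosure h (coeIdeal_ne_zero.mp hJ)).mpr hsJ⟩

theorem star_coeIdeal_eq_iff (hI : I ≠ ⊥) :
    star (I : FractionalIdeal (nonZeroDivisors S) M) = I ↔ (starClosure h).IsClosed I := by
  rw [← coe_starClosure h hI, coeIdeal_inj]
  exact (starClosure h).isClosed_iff.symm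

theorem isStarMaximal_iff {Q : Ideal S} :
    IsStarMaximal star Q ↔ IsMaximalClosed (starClosure h) Q :=
  (isMaximalClosed_iff fun _ => star_coeIdeal_eq_iff h).symm

end StarClosure

section TOperation

theorem div_algebraMap_mem_one_div_iff {p q : S} (hq : q ≠ 0) {J : Ideal S} (hJ : J ≠ ⊥) :
    algebraMap S M p / algebraMap S M q ∈ 1 / (J : FractionalIdeal (nonZeroDivisors S) M) ↔
      J ≤ (Ideal.span {q}).colon {p} := by
  rw [mem_div_iff_of_ne_zero (coeIdeal_ne_zero.mpr hJ)]
  simp only [mem_coeIdeal, forall_exists_index, and_imp, forall_apply_eq_imp_iff₂,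
    div_mul_eq_mul_div, ← map_mul, div_algebraMap_mem_one_iff hq, SetLike.le_def,
    mem_colon_span_singleton, mul_comm p]

theorem one_div_one_div_coeIdeal {J : Ideal S} (hJ : J ≠ ⊥) :
    1 / (1 / (J : FractionalIdeal (nonZeroDivisors S) M)) = vClosure J := by
  have hone : (1 : M) ∈ 1 / (J : FractionalIdeal (nonZeroDivisors S) M) :=
    (mem_div_iff_of_ne_zero (coeIdeal_ne_zero.mpr hJ)).mpr fun y hy =>
      (one_mul y).symm ▸ FractionalIdeal.coeIdeal_le_one hy
  have hne : 1 / (J : FractionalIdeal (nonZeroDivisors S) M) ≠ 0 := fun h0 =>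
    one_ne_zero ((mem_zero_iff _).mp (h0 ▸ hone))
  ext x
  rw [mem_div_iff_of_ne_zero hne, mem_coeIdeal]
  constructor
  · intro hx
    obtain ⟨s, rfl⟩ := (mem_one_iff _).mp (mul_one x ▸ hx 1 hone)
    refine ⟨s, mem_vClosure.mpr fun p q hpq => ?_, rfl⟩
    obtain rfl | hq := eq_or_ne q 0
    · obtain ⟨j, hj, hj0⟩ := Submodule.exists_mem_ne_zero_of_ne_bot hJ
      have hjp : j * p = 0 := zero_dvd_iff.mp (mem_colon_span_singleton.mp (hpq hj))
      rw [(mul_eq_zero.mp hjp).resolve_left hj0, mul_zero]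
    · rw [← div_algebraMap_mem_one_iff (M := M) hq, map_mul, mul_div_assoc]
      exact hx _ ((div_algebraMap_mem_one_div_iff hq hJ).mpr hpq)
  · rintro ⟨s, hs, rfl⟩ y hy
    obtain ⟨p, q, hq, rfl⟩ := IsFractionRing.div_surjective S y
    have hq' := nonZeroDivisors.ne_zero hq
    rw [← mul_div_assoc, ← map_mul, div_algebraMap_mem_one_iff hq']
    exact mem_vClosure.mp hs p q ((div_algebraMap_mem_one_div_iff hq' hJ).mp hy)

theorem tSet_coeIdeal {I : Ideal S} (hI : I ≠ ⊥) :
    tSet (I : FractionalIdeal (nonZeroDivisors S) M) = algebraMap S M '' (tClosure I) := by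
  ext x
  simp only [tSet, Set.mem_iUnion, Set.mem_ofPred_eq, exists_prop]
  constructor
  · rintro ⟨J, ⟨hJ, hfg, hle⟩, hx⟩
    obtain ⟨J', hfg', hle', rfl⟩ := exists_fg_coeIdeal_eq hfg hle
    rw [one_div_one_div_coeIdeal (coeIdeal_ne_zero.mp hJ)] at hx
    obtain ⟨s, hs, rfl⟩ := hx
    exact ⟨s, mem_tClosure.mpr ⟨J', hfg', hle', hs⟩, rfl⟩
  · rintro ⟨s, hs, rfl⟩
    obtain ⟨J, hfg, hle, hsJ⟩ := mem_tClosure.mp hs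
    obtain ⟨a, haI, ha⟩ := Submodule.exists_mem_ne_zero_of_ne_bot hI
    have hbot : J ⊔ Ideal.span {a} ≠ ⊥ :=
      ne_bot_of_le_ne_bot (Ideal.span_singleton_eq_bot.not.mpr ha) le_sup_right
    refine ⟨(J ⊔ Ideal.span {a} : Ideal S), ⟨coeIdeal_ne_zero.mpr hbot,
      (coeIdeal_fg _ (IsFractionRing.injective S M) _).mpr
        (Submodule.FG.sup hfg (Submodule.fg_span_singleton a)),
      (coeIdeal_le_coeIdeal M).mpr
        (sup_le hle ((Ideal.span_singleton_le_iff_mem I).mpr haI))⟩, ?_⟩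
    rw [one_div_one_div_coeIdeal hbot]
    exact ⟨s, vClosure.monotone le_sup_left hsJ, rfl⟩

theorem tSet_coeIdeal_eq_iff {I : Ideal S} (hI : I ≠ ⊥) :
    tSet (I : FractionalIdeal (nonZeroDivisors S) M) =
      (((I : FractionalIdeal (nonZeroDivisors S) M) : Submodule S M) : Set M) ↔
      tClosure.IsClosed I := by
  rw [tSet_coeIdeal hI, coe_coeIdeal_eq_image, Set.image_eq_image (IsFractionRing.injective S M),
    SetLike.coe_set_eq]
  exact tClosure.isClosed_iff.symm

theorem isTMaximal_iff {Q : Ideal S} : IsTMaximal M Q ↔ IsMaximalClosed tClosure Q :=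
  (isMaximalClosed_iff fun _ => tSet_coeIdeal_eq_iff).symm

theorem tSet_ssubset_one_iff {I : Ideal S} (hI : I ≠ ⊥) :
    tSet (I : FractionalIdeal (nonZeroDivisors S) M) ⊂
      (((1 : FractionalIdeal (nonZeroDivisors S) M) : Submodule S M) : Set M) ↔
      tClosure I ≠ ⊤ := by
  rw [tSet_coeIdeal hI, ← coeIdeal_top, coe_coeIdeal_eq_image,
    (IsFractionRing.injective S M).injOn.image_ssubset_image_iff (Set.subset_univ _)
      (Set.subset_univ _), SetLike.coe_ssubset_coe, lt_top_iff_ne_top]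

end TOperation

end FractionalIdeals

section BarStar

variable
  {star : FractionalIdeal (nonZeroDivisors R[X]) L → FractionalIdeal (nonZeroDivisors R[X]) L}
  (h : IsStarOperation R[X] L star) {ι : K →+* L}
  (hι : ∀ r : R, ι (algebraMap R K r) = algebraMap R[X] L (C r))
include hι

theorem exists_C_eq_of_map_eq_algebraMap {x : K} {f : R[X]} (hx : ι x = algebraMap R[X] L f) :
    ∃ r, C r = f ∧ algebraMap R K r = x := by
  obtain ⟨a, b, hb, rfl⟩ := IsFractionRing.div_surjective R x
  have hb' : algebraMap R K b ≠ 0 :=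
    IsFractionRing.to_map_eq_zero_iff.not.mpr (nonZeroDivisors.ne_zero hb)
  have hfb : f * C b = C a := IsFractionRing.injective R[X] L <| by
    rw [map_mul, ← hx, ← hι, ← hι, ← map_mul, div_mul_cancel₀ _ hb']
  have hdeg : f.natDegree = 0 := by
    rw [← natDegree_mul_C (nonZeroDivisors.ne_zero hb), hfb, natDegree_C]
  obtain ⟨r, rfl⟩ := natDegree_eq_zero.mp hdeg
  refine ⟨r, rfl, (eq_div_iff hb').mpr ?_⟩
  rw [← map_mul, C_injective (C_mul.trans hfb)]

theorem barStarSet_eq_image {I : Ideal R} (hI : I ≠ ⊥) :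
    barStarSet star ι I = algebraMap R K '' (contractClosure C (starClosure h) I) := by
  ext x
  constructor
  · intro hx
    obtain ⟨f, hf⟩ := (FractionalIdeal.mem_one_iff _).mp (h.coeIdeal_le_one (map_C_ne_bot hI) hx)
    obtain ⟨r, rfl, rfl⟩ := exists_C_eq_of_map_eq_algebraMap hι hf.symm
    refine ⟨r, (mem_starClosure h (map_C_ne_bot hI)).mpr ?_, rfl⟩
    rwa [hf]
  · rintro ⟨r, hr, rfl⟩
    rw [barStarSet, Set.mem_ofPred_eq, hι]
    exact (mem_starClosure h (map_C_ne_bot hI)).mp hr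

theorem barStarSet_eq_image_iff {I : Ideal R} (hI : I ≠ ⊥) :
    barStarSet star ι I = algebraMap R K '' I ↔
      (contractClosure C (starClosure h)).IsClosed I := by
  rw [barStarSet_eq_image h hι hI, Set.image_eq_image (IsFractionRing.injective R K),
    SetLike.coe_set_eq]
  exact (ClosureOperator.isClosed_iff _).symm

theorem isBarStarMaximal_iff {P : Ideal R} :
    IsBarStarMaximal star ι P ↔ IsMaximalClosed (contractClosure C (starClosure h)) P :=
  (isMaximalClosed_iff fun _ => barStarSet_eq_image_iff h hι).symm

end BarStar

theorem statement16
    (star : FractionalIdeal (nonZeroDivisors R[X]) L → FractionalIdeal (nonZeroDivisors R[X]) L)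
    (hstar : IsStarOperation R[X] L star) (hfc : StarFiniteCharacter R[X] L star)
    (ι : K →+* L) (hι : ∀ r : R, ι (algebraMap R K r) = algebraMap R[X] L (C r)) :
    List.TFAE
      [{Q : Ideal R[X] | IsStarMaximal star Q} = {Q : Ideal R[X] | IsTMaximal L Q},
       ∀ Q : Ideal R[X], IsStarMaximal star Q → Q.comap (C : R →+* R[X]) ≠ ⊥ →
         tSet (Q : FractionalIdeal (nonZeroDivisors R[X]) L) ⊂
           (((1 : FractionalIdeal (nonZeroDivisors R[X]) L) : Submodule R[X] L) : Set L),
       ({p : Ideal R | IsBarStarMaximal star ι p} = {p : Ideal R | IsTMaximal K p}) ∧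
         ∀ Q : Ideal R[X], IsStarMaximal star Q → Q.comap (C : R →+* R[X]) ≠ ⊥ →
           Q = (Q.comap (C : R →+* R[X])).map (C : R →+* R[X])] := by
  have hfinite := isFiniteType_starClosure hstar hfc
  have hclosure := isStarClosure_starClosure hstar
  simp only [Set.ext_iff, Set.mem_ofPred_eq, isStarMaximal_iff hstar, isTMaximal_iff,
    isBarStarMaximal_iff hstar hι]
  tfae_have 1 ↔ 2 := by
    rw [isMaximalClosed_iff_tClosure_iff_forall_tClosure_ne_top hfinite hclosure]
    exact forall₂_congr fun Q hQ => imp_congr_right fun _ => (tSet_ssubset_one_iff hQ.ne_bot).symm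
  tfae_have 1 ↔ 3 := isMaximalClosed_iff_tClosure_iff_contractClosure hfinite hclosure
  tfae_finish
end
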